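/- Let β, γ ∈ (0,1) and let p(t,x,y) = ∫_{(0,∞)} p_{2γ}(t^β s^{-β}, x-y) μ_β(ds) be the fundamental solution of the space-time fractional equation ∂^β u/∂t^β = -(-Δ)^γ u on ℝ^n. Then, as |x-y|^{-2γ/β} t → ∞: if n = 1 and γ ∈ (1/2, 1), p(t,x,y) ∼ (Γ(1/(2γ)) Γ(1 - 1/(2γ)) / (2πγ Γ(1 - β/(2γ)))) t^{-β/(2γ)}; if n = 1 and γ = 1/2, p(t,x,y) ∼ (β/(π Γ(1-β))) t^{-β} log(|x-y|^{-1/β} t); and if n > 2γ (with any γ ∈ (0,1)), p(t,x,y) ∼ (2γ Γ((n-2γ)/2) / (2^{1+2γ} π^{n/2} Γ(1-β) Γ(1+γ))) |x-y|^{2γ-n} t^{-β}. Here '∼ as |x-y|^{-2γ/β} t → ∞' means: for every ε > 0 there exists R > 0 such that whenever t > 0, x ≠ y ∈ ℝ^n and |x-y|^{-2γ/β} t ≥ R, the ratio of the two sides lies within ε of 1. -/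

import Mathlib

/-!
Let `η` be the one-sided stable law of index `γ`. Its Laplace transform shows that the
`2γ`-stable density is a mixture of Gaussian densities,
`p_{2γ}(τ, z) = ∫ (4π τ^{1/γ} w)^{-n/2} exp (-|z|² / (4 τ^{1/γ} w)) η(dw)`, so that the fundamental
solution is an explicit positive double mixture over `μ ⊗ η`. With `κ = β/γ`, `a = nκ/2`,
`X = |x - y|^{-2γ/β} t` and `Φ u = u^a e^{-u^κ/4}` (`profile`), `fundamental_eq` reads
`p(t,x,y) = (4π)^{-n/2} |x - y|^{-n} ∫∫ Φ (s / (X w^{1/κ})) μ(ds) η(dw)`,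
and only the behaviour of this double integral as `X → ∞` matters. The dimension enters through the
comparison of `a` with `β`, that is, of `n` with `2γ`.

* `a < β` (`tendsto_mean_low`, with `a = κ/2`): `∫ s^a dμ < ∞`, the exponential tends to `1`
  monotonically, and the limit is a product of a positive moment of `μ` and a negative moment
  of `η`, both of which are Gamma quotients.
* `a > β` (`tendsto_mean_high`): the moment diverges, and the tail `μ(x, ∞) ~ x^{-β} / Γ(1-β)`
  governs. The layer-cake formula `scaledMean_eq` writes the average over `μ` as an integral of the
  tail, and dominated convergence gives the limit.
* `a = β` (`tendsto_mean_critical`): the same integral of the tail is logarithmically divergent. In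
  the coordinate `s = x^θ` all scales `0 < θ < 1` contribute equally, whence a factor `log x`.

Two facts about stable laws carry the argument. The tail asymptotics `tendsto_tail` follow from the
Laplace transform by Karamata's method: convergence of Laplace exponents is convergence against
polynomials in `e^{-y}`, which extends to continuous functions by Weierstrass approximation and to
indicators by sandwiching. The existence of `η` (`exists_stableLaw`) is the stable limit
theorem for Pareto variables, with compactness of the probability measures on `[0, 1]` providing the
limit after the change of variable `s ↦ e^{-s}`.
-/
open MeasureTheory Set RealInnerProductSpace
open Filter Topology

/-! ### Stable laws and their moments -/

theorem integrable_prod_of_nonneg {X Y : Type*} [MeasurableSpace X] [MeasurableSpace Y]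
    {μ : Measure X} {ν : Measure Y} [SFinite μ] [SFinite ν] {f : X → Y → ℝ}
    (hf : AEStronglyMeasurable (Function.uncurry f) (μ.prod ν))
    (h0 : ∀ᵐ x ∂μ, ∀ᵐ y ∂ν, 0 ≤ f x y)
    (h1 : ∀ᵐ x ∂μ, Integrable (f x) ν)
    (h2 : Integrable (fun x => ∫ y, f x y ∂ν) μ) :
    Integrable (Function.uncurry f) (μ.prod ν) := by
  rw [integrable_prod_iff hf]
  refine ⟨h1, h2.congr ?_⟩
  filter_upwards [h0] with x hx
  refine integral_congr_ae ?_
  filter_upwards [hx] with y hy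
  simp [abs_of_nonneg hy]

theorem levy_integrand_nonneg {b r y : ℝ} (hr : 0 ≤ r) (hy : 0 < y) :
    0 ≤ (1 - Real.exp (-(r * y))) * y ^ (-1 - b) := by
  have : Real.exp (-(r * y)) ≤ 1 := by
    rw [Real.exp_le_one_iff]; nlinarith [mul_nonneg hr hy.le]
  exact mul_nonneg (by linarith) (Real.rpow_nonneg hy.le _)

theorem levy_integrableOn {b : ℝ} (hb0 : 0 < b) (hb1 : b < 1) {r : ℝ} (hr : 0 ≤ r) :
    IntegrableOn (fun y => (1 - Real.exp (-(r * y))) * y ^ (-1 - b)) (Ioi 0) := by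
  have hm : Measurable (fun y : ℝ => (1 - Real.exp (-(r * y))) * y ^ (-1 - b)) := by fun_prop
  rw [← Ioc_union_Ioi_eq_Ioi (zero_le_one : (0 : ℝ) ≤ 1)]
  refine IntegrableOn.union ?_ ?_
  · have h : IntegrableOn (fun y : ℝ => r * y ^ (-b)) (Ioc 0 1) := by
      refine Integrable.const_mul ?_ r
      have := intervalIntegral.intervalIntegrable_rpow' (a := 0) (b := 1) (r := -b) (by linarith)
      rwa [intervalIntegrable_iff_integrableOn_Ioc_of_le zero_le_one] at this
    refine Integrable.mono' h hm.aestronglyMeasurable ?_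
    filter_upwards [ae_restrict_mem measurableSet_Ioc] with y hy
    rw [Real.norm_of_nonneg (levy_integrand_nonneg hr hy.1)]
    have h1 : 1 - Real.exp (-(r * y)) ≤ r * y := by
      have := Real.add_one_le_exp (-(r * y)); linarith
    calc _ ≤ (r * y) * y ^ (-1 - b) :=
          mul_le_mul_of_nonneg_right h1 (Real.rpow_nonneg hy.1.le _)
      _ = r * y ^ (-b) := by
          rw [mul_assoc]; congr 1
          nth_rw 1 [← Real.rpow_one y]
          rw [← Real.rpow_add hy.1]; congr 1; ring
  · have h : IntegrableOn (fun y : ℝ => y ^ (-1 - b)) (Ioi 1) :=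
      integrableOn_Ioi_rpow_of_lt (by linarith) one_pos
    refine Integrable.mono' h hm.aestronglyMeasurable ?_
    filter_upwards [ae_restrict_mem measurableSet_Ioi] with y hy
    have hy0 : (0 : ℝ) < y := lt_trans one_pos hy
    rw [Real.norm_of_nonneg (levy_integrand_nonneg hr hy0)]
    have := Real.exp_pos (-(r * y))
    exact mul_le_of_le_one_left (Real.rpow_nonneg hy0.le _) (by linarith)

/-- The Lévy–Khintchine integral of the stable subordinator,
obtained from the Gamma integral through `1 - e^{-ry} = ∫₀ʳ y e^{-ly} dl`. -/
theorem levy_integral {b : ℝ} (hb0 : 0 < b) (hb1 : b < 1) {r : ℝ} (hr : 0 ≤ r) :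
    ∫ y in Ioi (0 : ℝ), (1 - Real.exp (-(r * y))) * y ^ (-1 - b)
      = r ^ b * (Real.Gamma (1 - b) / b) := by
  have hintg := levy_integrableOn hb0 hb1 hr
  have inner1 : ∀ y : ℝ, 0 < y → ∫ l in Ioc 0 r, Real.exp (-(l * y)) * y ^ (-b)
      = (1 - Real.exp (-(r * y))) * y ^ (-1 - b) := by
    intro y hy
    rw [← intervalIntegral.integral_of_le hr]
    have hd : ∀ l ∈ uIcc 0 r, HasDerivAt (fun l : ℝ => -(Real.exp (-(l * y)) * y ^ (-1 - b)))
        (Real.exp (-(l * y)) * y ^ (-b)) l := by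
      intro l _
      have h1 : HasDerivAt (fun l : ℝ => -(l * y)) (-y) l := by
        simpa using ((hasDerivAt_id' l).mul_const y).fun_neg
      have := ((h1.exp).mul_const (y ^ (-1 - b))).fun_neg
      refine this.congr_deriv ?_
      have : y ^ (-b) = y * y ^ (-1 - b) := by
        nth_rw 2 [← Real.rpow_one y]
        rw [← Real.rpow_add hy]; congr 1; ring
      rw [this]; ring
    rw [intervalIntegral.integral_eq_sub_of_hasDerivAt hd]
    · simp; ring
    · exact (by fun_prop : Continuous fun l : ℝ => Real.exp (-(l * y)) * y ^ (-b)).intervalIntegrable _ _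
  have inner2 : ∀ l : ℝ, 0 < l → ∫ y in Ioi (0 : ℝ), Real.exp (-(l * y)) * y ^ (-b)
      = l ^ (b - 1) * Real.Gamma (1 - b) := by
    intro l hl
    have := Real.integral_rpow_mul_exp_neg_mul_Ioi (a := 1 - b) (r := l) (by linarith) hl
    rw [show 1 - b - 1 = -b by ring] at this
    rw [show (fun y : ℝ => Real.exp (-(l * y)) * y ^ (-b)) = fun y => y ^ (-b) * Real.exp (-(l * y))
      from by ext; ring, this, one_div, Real.inv_rpow hl.le, ← Real.rpow_neg hl.le]
    congr 2; ring
  have hprod : Integrable (Function.uncurry fun y l : ℝ => Real.exp (-(l * y)) * y ^ (-b))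
      ((volume.restrict (Ioi 0)).prod (volume.restrict (Ioc 0 r))) := by
    refine integrable_prod_of_nonneg ?_ ?_ ?_ ?_
    · exact (by fun_prop : Measurable (Function.uncurry fun y l : ℝ =>
        Real.exp (-(l * y)) * y ^ (-b))).aestronglyMeasurable
    · filter_upwards [ae_restrict_mem measurableSet_Ioi] with y hy
      exact ae_of_all _ fun l => mul_nonneg (Real.exp_pos _).le (Real.rpow_nonneg (le_of_lt hy) _)
    · refine ae_of_all _ fun y => ?_
      exact (by fun_prop : Continuous fun l : ℝ =>
        Real.exp (-(l * y)) * y ^ (-b)).integrableOn_Ioc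
    · refine Integrable.congr hintg ?_
      filter_upwards [ae_restrict_mem measurableSet_Ioi] with y hy
      exact (inner1 y hy).symm
  calc ∫ y in Ioi (0 : ℝ), (1 - Real.exp (-(r * y))) * y ^ (-1 - b)
      = ∫ y in Ioi (0 : ℝ), ∫ l in Ioc 0 r, Real.exp (-(l * y)) * y ^ (-b) :=
        setIntegral_congr_fun measurableSet_Ioi fun y hy => (inner1 y hy).symm
    _ = ∫ l in Ioc 0 r, ∫ y in Ioi (0 : ℝ), Real.exp (-(l * y)) * y ^ (-b) :=
        integral_integral_swap hprod
    _ = ∫ l in Ioc 0 r, l ^ (b - 1) * Real.Gamma (1 - b) :=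
        setIntegral_congr_fun measurableSet_Ioc fun l hl => inner2 l hl.1
    _ = r ^ b * (Real.Gamma (1 - b) / b) := by
        rw [integral_mul_const, ← intervalIntegral.integral_of_le hr,
          integral_rpow (Or.inl (by linarith))]
        simp [Real.zero_rpow hb0.ne']; ring

/-- `μ` is the law at time one of an `α`-stable subordinator: a probability measure carried by
`(0, ∞)` whose Laplace transform is `exp (-r ^ α)`. It is a measure on all of `ℝ`, so that integrals
need not be restricted to `(0, ∞)`. -/
structure IsStableLaw (α : ℝ) (μ : Measure ℝ) : Prop where
  prob : IsProbabilityMeasure μ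
  supp : μ (Iic 0) = 0
  lap : ∀ r : ℝ, 0 < r → ∫ s, Real.exp (-(r * s)) ∂μ = Real.exp (-(r ^ α))

namespace IsStableLaw

variable {α : ℝ} {μ : Measure ℝ}

theorem ae_pos (h : IsStableLaw α μ) : ∀ᵐ s ∂μ, 0 < s := by
  rw [ae_iff]; simpa [Iic, not_lt] using h.supp

theorem integrable_exp (h : IsStableLaw α μ) {r : ℝ} (hr : 0 ≤ r) :
    Integrable (fun s => Real.exp (-(r * s))) μ := by
  have := h.prob
  refine Integrable.mono' (integrable_const (1 : ℝ))
    (by fun_prop : Measurable fun s : ℝ => Real.exp (-(r * s))).aestronglyMeasurable ?_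
  filter_upwards [h.ae_pos] with s hs
  rw [Real.norm_of_nonneg (Real.exp_pos _).le, Real.exp_le_one_iff]
  nlinarith [mul_nonneg hr hs.le]

theorem lap' (h : IsStableLaw α μ) (hα : 0 < α) {r : ℝ} (hr : 0 ≤ r) :
    ∫ s, Real.exp (-(r * s)) ∂μ = Real.exp (-(r ^ α)) := by
  have := h.prob
  rcases hr.eq_or_lt with rfl | hr
  · simp [Real.zero_rpow hα.ne']
  · exact h.lap r hr

/-- Negative moments, from `Γ(b) s^{-b} = ∫ l^{b-1} e^{-ls} dl`. -/
theorem neg_moment (h : IsStableLaw α μ) (hα : 0 < α) {b : ℝ} (hb : 0 < b) :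
    Integrable (fun s => s ^ (-b)) μ ∧
      ∫ s, s ^ (-b) ∂μ = Real.Gamma (b / α) / (α * Real.Gamma b) := by
  have := h.prob
  have hG := Real.Gamma_pos_of_pos hb
  have inner1 : ∀ s : ℝ, 0 < s → ∫ l in Ioi (0 : ℝ), l ^ (b - 1) * Real.exp (-(l * s))
      = Real.Gamma b * s ^ (-b) := by
    intro s hs
    have := Real.integral_rpow_mul_exp_neg_mul_Ioi (a := b) (r := s) hb hs
    simp_rw [mul_comm _ s, this, one_div, Real.inv_rpow hs.le, ← Real.rpow_neg hs.le]
    ring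
  have inner2 : ∀ l : ℝ, 0 < l → ∫ s, l ^ (b - 1) * Real.exp (-(l * s)) ∂μ
      = l ^ (b - 1) * Real.exp (-(l ^ α)) := by
    intro l hl
    rw [integral_const_mul, h.lap l hl]
  have hval : ∫ l in Ioi (0 : ℝ), l ^ (b - 1) * Real.exp (-(l ^ α)) = 1 / α * Real.Gamma (b / α) := by
    rw [integral_rpow_mul_exp_neg_rpow hα (by linarith)]; congr 3; ring
  have hpos : 0 < 1 / α * Real.Gamma (b / α) :=
    mul_pos (by positivity) (Real.Gamma_pos_of_pos (by positivity))
  have hintg : IntegrableOn (fun l : ℝ => l ^ (b - 1) * Real.exp (-(l ^ α))) (Ioi 0) := by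
    by_contra hc
    rw [integral_undef hc] at hval
    linarith
  have hprod : Integrable (Function.uncurry fun l s : ℝ => l ^ (b - 1) * Real.exp (-(l * s)))
      ((volume.restrict (Ioi 0)).prod μ) := by
    refine integrable_prod_of_nonneg ?_ ?_ ?_ ?_
    · exact (by fun_prop : Measurable (Function.uncurry fun l s : ℝ =>
        l ^ (b - 1) * Real.exp (-(l * s)))).aestronglyMeasurable
    · filter_upwards [ae_restrict_mem measurableSet_Ioi] with y hy
      exact ae_of_all _ fun l => mul_nonneg (Real.rpow_nonneg (le_of_lt hy) _) (Real.exp_pos _).le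
    · filter_upwards [ae_restrict_mem measurableSet_Ioi] with y hy
      exact (h.integrable_exp (le_of_lt hy)).const_mul _
    · refine Integrable.congr hintg ?_
      filter_upwards [ae_restrict_mem measurableSet_Ioi] with y hy
      exact (inner2 y hy).symm
  have hae : (fun s => ∫ l in Ioi (0 : ℝ), l ^ (b - 1) * Real.exp (-(l * s)))
      =ᵐ[μ] fun s => Real.Gamma b * s ^ (-b) := by
    filter_upwards [h.ae_pos] with s hs using inner1 s hs
  have hi := (hprod.integral_prod_right).congr hae
  refine ⟨?_, ?_⟩
  · have := hi.const_mul (Real.Gamma b)⁻¹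
    simpa [← mul_assoc, inv_mul_cancel₀ hG.ne'] using this
  · have e := integral_integral_swap hprod
    rw [setIntegral_congr_fun measurableSet_Ioi fun l hl => inner2 l hl, hval,
      integral_congr_ae hae, integral_const_mul] at e
    rw [eq_div_iff (by positivity)]
    field_simp at e
    linarith

/-- Positive moments below the stability index,
from `s^a Γ(1-a)/a = ∫ (1 - e^{-rs}) r^{-1-a} dr`. -/
theorem pos_moment (h : IsStableLaw α μ) (hα : 0 < α) (hα1 : α < 1) {a : ℝ} (ha : 0 < a)
    (haα : a < α) :
    Integrable (fun s => s ^ a) μ ∧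
      ∫ s, s ^ a ∂μ = Real.Gamma (1 - a / α) / Real.Gamma (1 - a) := by
  have := h.prob
  have hG := Real.Gamma_pos_of_pos (by linarith : 0 < 1 - a)
  have hq1 : a / α < 1 := by rwa [div_lt_one hα]
  have hq0 : 0 < a / α := by positivity
  have inner1 : ∀ s : ℝ, 0 < s → ∫ r in Ioi (0 : ℝ), (1 - Real.exp (-(r * s))) * r ^ (-1 - a)
      = s ^ a * (Real.Gamma (1 - a) / a) := by
    intro s hs
    rw [← levy_integral ha (by linarith) hs.le]
    simp_rw [mul_comm s]
  have inner2 : ∀ r : ℝ, 0 < r → ∫ s, (1 - Real.exp (-(r * s))) * r ^ (-1 - a) ∂μ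
      = (1 - Real.exp (-(r ^ α))) * r ^ (-1 - a) := by
    intro r hr
    rw [integral_mul_const, integral_sub (integrable_const _) (h.integrable_exp hr.le), h.lap r hr]
    simp
  have hkey : ∀ r ∈ Ioi (0 : ℝ), (|α| * r ^ (α - 1)) • ((1 - Real.exp (-(1 * r ^ α))) *
      (r ^ α) ^ (-1 - a / α)) = α * ((1 - Real.exp (-(r ^ α))) * r ^ (-1 - a)) := by
    intro r hr
    have hr' : (0 : ℝ) < r := hr
    rw [abs_of_pos hα, ← Real.rpow_mul hr'.le, one_mul, smul_eq_mul]
    have : r ^ (-1 - a) = r ^ (α - 1) * r ^ (α * (-1 - a / α)) := by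
      rw [← Real.rpow_add hr']; congr 1; field_simp; ring
    rw [this]; ring
  have hintg : IntegrableOn (fun r : ℝ => (1 - Real.exp (-(r ^ α))) * r ^ (-1 - a)) (Ioi 0) := by
    have h1 := (integrableOn_Ioi_comp_rpow_iff (fun u : ℝ => (1 - Real.exp (-(1 * u))) *
      u ^ (-1 - a / α)) hα.ne').2 (levy_integrableOn hq0 hq1 zero_le_one)
    have h2 := (h1.congr_fun hkey measurableSet_Ioi).const_mul α⁻¹
    refine Integrable.congr h2 (ae_of_all _ fun r => ?_)
    field_simp
  have hval : ∫ r in Ioi (0 : ℝ), (1 - Real.exp (-(r ^ α))) * r ^ (-1 - a)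
      = Real.Gamma (1 - a / α) / a := by
    have h1 := integral_comp_rpow_Ioi (fun u : ℝ => (1 - Real.exp (-(1 * u))) *
      u ^ (-1 - a / α)) hα.ne'
    rw [setIntegral_congr_fun measurableSet_Ioi hkey, levy_integral hq0 hq1 zero_le_one,
      integral_const_mul] at h1
    rw [Real.one_rpow] at h1
    field_simp at h1 ⊢
    linarith
  have hprod : Integrable (Function.uncurry fun r s : ℝ => (1 - Real.exp (-(r * s))) * r ^ (-1 - a))
      ((volume.restrict (Ioi 0)).prod μ) := by
    refine integrable_prod_of_nonneg ?_ ?_ ?_ ?_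
    · exact (by fun_prop : Measurable (Function.uncurry fun r s : ℝ =>
        (1 - Real.exp (-(r * s))) * r ^ (-1 - a))).aestronglyMeasurable
    · filter_upwards [ae_restrict_mem measurableSet_Ioi] with r hr
      filter_upwards [h.ae_pos] with s hs
      have := levy_integrand_nonneg (b := a) hs.le hr
      rwa [mul_comm s] at this
    · filter_upwards [ae_restrict_mem measurableSet_Ioi] with r hr
      exact ((integrable_const _).sub (h.integrable_exp (le_of_lt hr))).mul_const _
    · refine Integrable.congr hintg ?_
      filter_upwards [ae_restrict_mem measurableSet_Ioi] with y hy
      exact (inner2 y hy).symm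
  have hae : (fun s => ∫ r in Ioi (0 : ℝ), (1 - Real.exp (-(r * s))) * r ^ (-1 - a))
      =ᵐ[μ] fun s => s ^ a * (Real.Gamma (1 - a) / a) := by
    filter_upwards [h.ae_pos] with s hs using inner1 s hs
  have hi := (hprod.integral_prod_right).congr hae
  refine ⟨?_, ?_⟩
  · refine (hi.mul_const (Real.Gamma (1 - a) / a)⁻¹).congr (ae_of_all _ fun s => ?_)
    field_simp
  · have e := integral_integral_swap hprod
    rw [setIntegral_congr_fun measurableSet_Ioi fun l hl => inner2 l hl, hval,
      integral_congr_ae hae, integral_mul_const] at e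
    field_simp at e ⊢
    linarith

end IsStableLaw

/-! ### Existence of one-sided stable laws -/

theorem pareto_integral {g : ℝ} (hg : 0 < g) (f : ℝ → ℝ) :
    ∫ x, f x ∂(ProbabilityTheory.paretoMeasure 1 g)
      = ∫ y in Ioi (1 : ℝ), g * (f y * y ^ (-1 - g)) := by
  have hm : Measurable (ProbabilityTheory.paretoPDF 1 g) :=
    (ProbabilityTheory.measurable_paretoPDFReal 1 g).ennreal_ofReal
  rw [ProbabilityTheory.paretoMeasure, integral_withDensity_eq_integral_toReal_smul hm
    (ae_of_all _ fun x => ENNReal.ofReal_lt_top), ← integral_Ici_eq_integral_Ioi,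
    ← integral_indicator measurableSet_Ici]
  congr 1; ext x
  rw [ProbabilityTheory.paretoPDF,
    ENNReal.toReal_ofReal (ProbabilityTheory.paretoPDFReal_nonneg zero_le_one hg.le x)]
  by_cases hx : 1 ≤ x
  · simp [ProbabilityTheory.paretoPDFReal, hx, indicator]
    rw [show -1 + -g = -1 - g by ring]; ring
  · simp [ProbabilityTheory.paretoPDFReal, hx, indicator]

/-- The defect of the Laplace transform of the Pareto law: scaling turns it into a truncated
Lévy–Khintchine integral. -/
theorem pareto_defect {g : ℝ} (hg0 : 0 < g) (r : ℝ) {c : ℝ} (hc : 0 < c) :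
    ∫ x, (1 - Real.exp (-(r * c * |x|))) ∂(ProbabilityTheory.paretoMeasure 1 g)
      = g * c ^ g * ∫ y in Ioi c, (1 - Real.exp (-(r * y))) * y ^ (-1 - g) := by
  rw [pareto_integral hg0, integral_const_mul, mul_assoc]
  congr 1
  have h1 := integral_comp_mul_left_Ioi (fun y : ℝ => (1 - Real.exp (-(r * y))) * y ^ (-1 - g)) 1 hc
  rw [mul_one] at h1
  have h2 : ∫ y in Ioi (1 : ℝ), (1 - Real.exp (-(r * (c * y)))) * (c * y) ^ (-1 - g)
      = ∫ y in Ioi (1 : ℝ), c ^ (-1 - g) * ((1 - Real.exp (-(r * c * |y|))) * y ^ (-1 - g)) := by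
    refine setIntegral_congr_fun measurableSet_Ioi fun y hy => ?_
    have hy0 : (0 : ℝ) < y := lt_trans one_pos hy
    rw [Real.mul_rpow hc.le hy0.le, abs_of_pos hy0, ← mul_assoc r]; ring
  rw [h2, integral_const_mul] at h1
  have h3 : c ^ (-1 - g) * (c ^ g * c) = 1 := by
    have := Real.rpow_pos_of_pos hc g
    rw [Real.rpow_sub hc, Real.rpow_neg_one]
    field_simp
  have h4 : c * c⁻¹ = 1 := mul_inv_cancel₀ hc.ne'
  rw [smul_eq_mul] at h1
  set I := ∫ y in Ioi (1 : ℝ), (1 - Real.exp (-(r * c * |y|))) * y ^ (-1 - g)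
  set J := ∫ y in Ioi c, (1 - Real.exp (-(r * y))) * y ^ (-1 - g)
  calc I = (c ^ (-1 - g) * (c ^ g * c)) * I := by rw [h3, one_mul]
    _ = c ^ g * c * (c ^ (-1 - g) * I) := by ring
    _ = c ^ g * J * (c * c⁻¹) := by rw [h1]; ring
    _ = c ^ g * J := by rw [h4, mul_one]

theorem tendsto_levy_trunc {g : ℝ} (hg0 : 0 < g) (hg1 : g < 1) {r : ℝ} (hr : 0 ≤ r)
    {c : ℕ → ℝ} (hc0 : ∀ n, 0 ≤ c n) (hc : Tendsto c atTop (𝓝 0)) :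
    Tendsto (fun n => ∫ y in Ioi (c n), (1 - Real.exp (-(r * y))) * y ^ (-1 - g)) atTop
      (𝓝 (r ^ g * (Real.Gamma (1 - g) / g))) := by
  rw [← levy_integral hg0 hg1 hr]
  have hintg := levy_integrableOn hg0 hg1 hr
  have e : ∀ n, ∫ y in Ioi (c n), (1 - Real.exp (-(r * y))) * y ^ (-1 - g)
      = ∫ y in Ioi (0 : ℝ), (Ioi (c n)).indicator
        (fun y => (1 - Real.exp (-(r * y))) * y ^ (-1 - g)) y := by
    intro n
    rw [setIntegral_indicator measurableSet_Ioi, Ioi_inter_Ioi, max_eq_right (hc0 n)]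
  simp_rw [e]
  refine tendsto_integral_of_dominated_convergence _ ?_ hintg.norm ?_ ?_
  · intro n
    exact hintg.aestronglyMeasurable.indicator measurableSet_Ioi
  · intro n
    exact ae_of_all _ fun y => norm_indicator_le_norm_self _ _
  · filter_upwards [ae_restrict_mem measurableSet_Ioi] with y hy
    refine tendsto_const_nhds.congr' ?_
    filter_upwards [hc.eventually (gt_mem_nhds (show (0 : ℝ) < y from hy))] with n hn
    rw [indicator_of_mem (show y ∈ Ioi (c n) from hn)]

/-- The normalising constants in the stable limit theorem for the Pareto law of index `g`: since
`n * c ^ g * Γ(1 - g) = 1` for `c = stableScale g n`, the sum of `n` independent Pareto variables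
scaled by `c` has Laplace exponent tending to `r ^ g`. -/
noncomputable def stableScale (g : ℝ) (n : ℕ) : ℝ := (n * Real.Gamma (1 - g)) ^ (-(1 / g))

theorem stableScale_nonneg {g : ℝ} (hg1 : g < 1) (n : ℕ) : 0 ≤ stableScale g n := by
  have := Real.Gamma_pos_of_pos (by linarith : 0 < 1 - g)
  exact Real.rpow_nonneg (by positivity) _

theorem tendsto_stableScale {g : ℝ} (hg0 : 0 < g) (hg1 : g < 1) :
    Tendsto (stableScale g) atTop (𝓝 0) := by
  have := Real.Gamma_pos_of_pos (by linarith : 0 < 1 - g)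
  exact (tendsto_rpow_neg_atTop (by positivity : 0 < 1 / g)).comp
    (tendsto_natCast_atTop_atTop.atTop_mul_const this)

/-- The Laplace transform of a normalised sum of `n` independent Pareto variables tends to that of
the stable law. The absolute value makes the exponential bounded on all of `ℝ`; it is invisible to
the Pareto law. -/
theorem pareto_tendsto {g : ℝ} (hg0 : 0 < g) (hg1 : g < 1) {r : ℝ} (hr : 0 ≤ r) :
    Tendsto (fun n : ℕ => (∫ x, Real.exp (-(r * stableScale g n * |x|))
      ∂(ProbabilityTheory.paretoMeasure 1 g)) ^ n) atTop (𝓝 (Real.exp (-(r ^ g)))) := by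
  have hG := Real.Gamma_pos_of_pos (by linarith : 0 < 1 - g)
  have : IsProbabilityMeasure (ProbabilityTheory.paretoMeasure 1 g) :=
    ProbabilityTheory.isProbabilityMeasure_paretoMeasure one_pos hg0
  have hI : ∀ n, Integrable (fun x => Real.exp (-(r * stableScale g n * |x|)))
      (ProbabilityTheory.paretoMeasure 1 g) := by
    intro n
    refine Integrable.mono' (integrable_const (1 : ℝ)) (by fun_prop) (ae_of_all _ fun x => ?_)
    rw [Real.norm_of_nonneg (Real.exp_pos _).le, Real.exp_le_one_iff]
    have := mul_nonneg (mul_nonneg hr (stableScale_nonneg hg1 n)) (abs_nonneg x)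
    linarith
  have key : Tendsto (fun n : ℕ => (n : ℝ) * ((∫ x, Real.exp (-(r * stableScale g n * |x|))
      ∂(ProbabilityTheory.paretoMeasure 1 g)) - 1)) atTop (𝓝 (-(r ^ g))) := by
    have h1 := (tendsto_levy_trunc hg0 hg1 hr (stableScale_nonneg hg1)
      (tendsto_stableScale hg0 hg1)).const_mul (-(g / Real.Gamma (1 - g)))
    have h2 : -(g / Real.Gamma (1 - g)) * (r ^ g * (Real.Gamma (1 - g) / g)) = -(r ^ g) := by
      field_simp
    rw [h2] at h1
    refine h1.congr' ?_
    filter_upwards [eventually_gt_atTop 0] with n hn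
    have hn' : (0 : ℝ) < n := by exact_mod_cast hn
    have hc : 0 < stableScale g n := Real.rpow_pos_of_pos (by positivity) _
    have hcg : stableScale g n ^ g = (n * Real.Gamma (1 - g))⁻¹ := by
      rw [stableScale, ← Real.rpow_mul (by positivity), ← Real.rpow_neg_one]
      congr 1; field_simp
    have h3 := pareto_defect hg0 r hc
    rw [integral_sub (integrable_const _) (hI n), integral_const, hcg] at h3
    simp only [probReal_univ, smul_eq_mul, mul_one] at h3
    have h4 : (∫ x, Real.exp (-(r * stableScale g n * |x|))
      ∂(ProbabilityTheory.paretoMeasure 1 g)) - 1 = -(g * (↑n * Real.Gamma (1 - g))⁻¹ *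
        ∫ y in Ioi (stableScale g n), (1 - Real.exp (-(r * y))) * y ^ (-1 - g)) := by linarith
    rw [h4]; field_simp
  have := Real.tendsto_one_add_pow_exp_of_tendsto key
  simpa using this

/-- Existence of the one-sided stable law of index `g`, as a weak limit (on the compact interval
`[0, 1]`, after the substitution `w = e^{-s}`) of normalised sums of independent Pareto variables. -/
theorem exists_stableLaw {g : ℝ} (hg0 : 0 < g) (hg1 : g < 1) : ∃ η : Measure ℝ, IsStableLaw g η := by
  have hpar : IsProbabilityMeasure (ProbabilityTheory.paretoMeasure 1 g) :=
    ProbabilityTheory.isProbabilityMeasure_paretoMeasure one_pos hg0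
  let W : (n : ℕ) → (Fin n → ℝ) → unitInterval := fun n x =>
    ⟨Real.exp (-(stableScale g n * ∑ i, |x i|)), (Real.exp_pos _).le, by
      rw [Real.exp_le_one_iff]
      have := mul_nonneg (stableScale_nonneg hg1 n)
        (Finset.sum_nonneg fun i (_ : i ∈ Finset.univ) => abs_nonneg (x i))
      linarith⟩
  have hW : ∀ n, Measurable (W n) := fun n => Measurable.subtype_mk (by fun_prop)
  let M : ℕ → ProbabilityMeasure unitInterval := fun n =>
    ⟨(Measure.pi fun _ : Fin n => ProbabilityTheory.paretoMeasure 1 g).map (W n),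
      Measure.isProbabilityMeasure_map (hW n).aemeasurable⟩
  have hM : ∀ r : ℝ, 0 < r → ∀ n, ∫ w : unitInterval, (w : ℝ) ^ r ∂(M n : Measure unitInterval)
      = (∫ x, Real.exp (-(r * stableScale g n * |x|))
        ∂(ProbabilityTheory.paretoMeasure 1 g)) ^ n := by
    intro r hr n
    have h1 := integral_fintype_prod_eq_pow (ι := Fin n)
      (μ := ProbabilityTheory.paretoMeasure 1 g) (fun x => Real.exp (-(r * stableScale g n * |x|)))
    rw [Fintype.card_fin] at h1
    rw [← h1]
    change ∫ w : unitInterval, (w : ℝ) ^ r ∂(Measure.map (W n) _) = _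
    rw [integral_map (hW n).aemeasurable (by
      exact (by fun_prop : Measurable fun w : unitInterval => (w : ℝ) ^ r).aestronglyMeasurable)]
    congr 1; ext x
    simp only [W]
    rw [← Real.exp_mul, ← Real.exp_sum]
    congr 1
    rw [Finset.mul_sum, ← Finset.sum_neg_distrib, Finset.sum_mul]
    exact Finset.sum_congr rfl fun i _ => by ring
  -- an ultrafilter limit avoids extracting a convergent subsequence
  let U : Ultrafilter ℕ := Ultrafilter.of atTop
  obtain ⟨m, -, hm⟩ := isCompact_univ.ultrafilter_le_nhds (U.map M) (by simp)
  have hm' : Tendsto M U (𝓝 m) := hm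
  have hlap : ∀ r : ℝ, 0 < r → ∫ w : unitInterval, (w : ℝ) ^ r ∂(m : Measure unitInterval)
      = Real.exp (-(r ^ g)) := by
    intro r hr
    have hcont : Continuous fun w : unitInterval => (w : ℝ) ^ r :=
      (Real.continuous_rpow_const hr.le).comp continuous_subtype_val
    have h1 := ProbabilityMeasure.tendsto_iff_forall_integral_tendsto.1 hm'
      (BoundedContinuousFunction.mkOfCompact ⟨_, hcont⟩)
    simp only [BoundedContinuousFunction.mkOfCompact_apply, ContinuousMap.coe_mk] at h1
    simp_rw [hM r hr] at h1
    exact tendsto_nhds_unique h1 ((pareto_tendsto hg0 hg1 hr.le).mono_left (Ultrafilter.of_le _))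
  have hInt : ∀ r : ℝ, 0 < r → Integrable (fun w : unitInterval => (w : ℝ) ^ r)
      (m : Measure unitInterval) := by
    intro r hr
    by_contra hc
    have := hlap r hr
    rw [integral_undef hc] at this
    exact (Real.exp_pos _).ne this
  -- no mass escapes to `s = ∞`, that is, to `w = 0`: let `r → 0`
  have h0 : (m : Measure unitInterval) {0} = 0 := by
    have hle : ∀ r : ℝ, 0 < r → Real.exp (-(r ^ g)) ≤ (m : Measure unitInterval).real {0}ᶜ := by
      intro r hr
      rw [← hlap r hr, ← integral_indicator_one (measurableSet_singleton _).compl]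
      refine integral_mono (hInt r hr) ((integrable_const (1 : ℝ)).indicator
        (measurableSet_singleton _).compl) fun w => ?_
      by_cases hw : w = 0
      · simp [hw, Real.zero_rpow hr.ne']
      · simp only [indicator, mem_compl_iff, mem_singleton_iff, hw, not_false_eq_true, if_true,
          Pi.one_apply]
        exact Real.rpow_le_one w.2.1 w.2.2 hr.le
    have hlim : Tendsto (fun r : ℝ => Real.exp (-(r ^ g))) (𝓝[>] 0) (𝓝 1) := by
      have : ContinuousAt (fun r : ℝ => Real.exp (-(r ^ g))) 0 :=
        (((Real.continuousAt_rpow_const 0 g (Or.inr hg0.le)).neg).rexp)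
      have := this.tendsto
      simp only [Real.zero_rpow hg0.ne', neg_zero, Real.exp_zero] at this
      exact this.mono_left nhdsWithin_le_nhds
    have h1 : 1 ≤ (m : Measure unitInterval).real {0}ᶜ :=
      le_of_tendsto hlim (by filter_upwards [self_mem_nhdsWithin] with r hr using hle r hr)
    have h2 := probReal_compl_eq_one_sub (μ := (m : Measure unitInterval))
      (measurableSet_singleton (0 : unitInterval))
    have h3 : (m : Measure unitInterval).real {0} = 0 :=
      le_antisymm (by linarith) measureReal_nonneg
    simpa [measureReal_eq_zero_iff] using h3
  -- there is no atom at `s = 0`, that is, at `w = 1`: let `r → ∞`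
  have h1 : (m : Measure unitInterval) {1} = 0 := by
    have hle : ∀ r : ℝ, 0 < r → (m : Measure unitInterval).real {1} ≤ Real.exp (-(r ^ g)) := by
      intro r hr
      rw [← hlap r hr, ← integral_indicator_one (measurableSet_singleton _)]
      refine integral_mono ((integrable_const (1 : ℝ)).indicator
        (measurableSet_singleton _)) (hInt r hr) fun w => ?_
      by_cases hw : w = 1
      · simp [hw]
      · simp only [indicator, mem_singleton_iff, hw, if_false]
        exact Real.rpow_nonneg w.2.1 _
    have hlim : Tendsto (fun r : ℝ => Real.exp (-(r ^ g))) atTop (𝓝 0) :=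
      Real.tendsto_exp_neg_atTop_nhds_zero.comp (tendsto_rpow_atTop hg0)
    have h1 : (m : Measure unitInterval).real {1} ≤ 0 :=
      ge_of_tendsto hlim (by filter_upwards [eventually_gt_atTop 0] with r hr using hle r hr)
    have h3 : (m : Measure unitInterval).real {1} = 0 := le_antisymm h1 measureReal_nonneg
    simpa [measureReal_eq_zero_iff] using h3
  have hL : Measurable fun w : unitInterval => -Real.log (w : ℝ) := by fun_prop
  refine ⟨(m : Measure unitInterval).map fun w : unitInterval => -Real.log (w : ℝ),
    Measure.isProbabilityMeasure_map hL.aemeasurable, ?_, ?_⟩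
  · rw [Measure.map_apply hL measurableSet_Iic]
    refine measure_mono_null (t := {0} ∪ {1}) ?_ (measure_union_null h0 h1)
    intro w hw
    simp only [mem_preimage, mem_Iic, Left.neg_nonpos_iff] at hw
    rcases w.2.1.eq_or_lt with h | h
    · left; exact Subtype.ext h.symm
    · right
      have : (1 : ℝ) ≤ w := (Real.log_nonneg_iff h).1 hw
      exact Subtype.ext (le_antisymm w.2.2 this)
  · intro r hr
    rw [integral_map hL.aemeasurable (by
      exact (by fun_prop : Measurable fun s : ℝ => Real.exp (-(r * s))).aestronglyMeasurable), ← hlap r hr]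
    refine integral_congr_ae ?_
    have : ∀ᵐ w ∂(m : Measure unitInterval), w ≠ 0 := by
      rw [ae_iff]; simpa using h0
    filter_upwards [this] with w hw
    have hw0 : (0 : ℝ) < w := lt_of_le_of_ne w.2.1 fun h => hw (Subtype.ext h.symm)
    rw [Real.rpow_def_of_pos hw0]
    congr 1; ring

/-! ### Tail asymptotics of a stable law -/

namespace IsStableLaw

variable {β : ℝ} {μ : Measure ℝ}

theorem tendsto_one_sub_exp (hβ0 : 0 < β) {A : ℝ} :
    Tendsto (fun x : ℝ => x ^ β * (1 - Real.exp (-(A * x ^ (-β))))) atTop (𝓝 A) := by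
  have hd : HasDerivAt (fun u : ℝ => -Real.exp (-(A * u))) A 0 := by
    have h1 : HasDerivAt (fun u : ℝ => -(A * u)) (-A) 0 := by
      simpa using ((hasDerivAt_id' (0 : ℝ)).const_mul A).fun_neg
    refine (h1.exp.fun_neg).congr_deriv ?_
    simp
  have h1 := hasDerivAt_iff_tendsto_slope_zero.1 hd
  have h2 : Tendsto (fun x : ℝ => x ^ (-β)) atTop (𝓝[≠] 0) := by
    refine tendsto_nhdsWithin_iff.2 ⟨tendsto_rpow_neg_atTop hβ0, ?_⟩
    filter_upwards [eventually_gt_atTop 0] with x hx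
    exact (Real.rpow_pos_of_pos hx _).ne'
  refine (h1.comp h2).congr' ?_
  filter_upwards [eventually_gt_atTop 0] with x hx
  simp only [Function.comp, smul_eq_mul, zero_add, mul_zero, neg_zero, Real.exp_zero]
  rw [Real.rpow_neg hx.le, inv_inv]
  ring

theorem exp_mem_Icc {x s : ℝ} (hx : 0 < x) (hs : 0 < s) :
    Real.exp (-(x⁻¹ * s)) ∈ Icc (0 : ℝ) 1 := by
  refine ⟨(Real.exp_pos _).le, ?_⟩
  rw [Real.exp_le_one_iff]
  have : 0 < x⁻¹ * s := by positivity
  linarith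

theorem integrable_one_sub (h : IsStableLaw β μ) {k : ℝ → ℝ} (hk : Continuous k) {x : ℝ}
    (hx : 0 < x) :
    Integrable (fun s => (1 - Real.exp (-(x⁻¹ * s))) * k (Real.exp (-(x⁻¹ * s)))) μ := by
  have := h.prob
  obtain ⟨K, hK⟩ := isCompact_Icc.exists_bound_of_continuousOn (s := Icc (0 : ℝ) 1)
    (f := fun w => (1 - w) * k w) (by fun_prop)
  refine Integrable.mono' (integrable_const K) (by fun_prop) ?_
  filter_upwards [h.ae_pos] with s hs
  exact hK _ (exp_mem_Icc hx hs)

theorem integrableOn_levy_mul (hβ0 : 0 < β) (hβ1 : β < 1) {k : ℝ → ℝ} (hk : Continuous k) :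
    IntegrableOn (fun y => (1 - Real.exp (-y)) * k (Real.exp (-y)) * y ^ (-1 - β)) (Ioi 0) := by
  obtain ⟨K, hK⟩ := isCompact_Icc.exists_bound_of_continuousOn (s := Icc (0 : ℝ) 1)
    (f := k) (by fun_prop)
  have h1 := levy_integrableOn hβ0 hβ1 zero_le_one
  have h2 := Integrable.bdd_mul (c := K) h1 (f := fun y => k (Real.exp (-y)))
    (by fun_prop) (by
      filter_upwards [ae_restrict_mem measurableSet_Ioi] with y hy
      have := exp_mem_Icc one_pos hy
      simp only [inv_one, one_mul] at this
      exact hK _ this)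
  refine h2.congr (ae_of_all _ fun y => ?_)
  simp only [one_mul]; ring

/-- Vague convergence of the rescaled stable laws to the Lévy measure, tested against polynomials
in `e^{-y}` (weighted by `1 - e^{-y}`): this is the convergence of Laplace exponents. -/
theorem karamata_polynomial (h : IsStableLaw β μ) (hβ0 : 0 < β) (hβ1 : β < 1)
    (P : Polynomial ℝ) :
    Tendsto (fun x : ℝ => x ^ β * ∫ s, (1 - Real.exp (-(x⁻¹ * s))) *
        P.eval (Real.exp (-(x⁻¹ * s))) ∂μ) atTop
      (𝓝 (β / Real.Gamma (1 - β) *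
        ∫ y in Ioi (0 : ℝ), (1 - Real.exp (-y)) * P.eval (Real.exp (-y)) * y ^ (-1 - β))) := by
  have hG := Real.Gamma_pos_of_pos (by linarith : 0 < 1 - β)
  induction P using Polynomial.induction_on' with
  | add p q hp hq =>
    have h1 := hp.add hq
    rw [← mul_add, ← integral_add (integrableOn_levy_mul hβ0 hβ1 p.continuous)
      (integrableOn_levy_mul hβ0 hβ1 q.continuous)] at h1
    simp_rw [Polynomial.eval_add, mul_add, add_mul]
    refine h1.congr' ?_
    filter_upwards [eventually_gt_atTop 0] with x hx
    rw [← mul_add, ← integral_add (h.integrable_one_sub p.continuous hx)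
      (h.integrable_one_sub q.continuous hx)]
  | monomial j a =>
    have hlim : β / Real.Gamma (1 - β) * ∫ y in Ioi (0 : ℝ), (1 - Real.exp (-y)) *
        (Polynomial.monomial j a).eval (Real.exp (-y)) * y ^ (-1 - β)
        = a * (((j : ℝ) + 1) ^ β - (j : ℝ) ^ β) := by
      have e : ∀ y : ℝ, (1 - Real.exp (-y)) *
          (Polynomial.monomial j a).eval (Real.exp (-y)) * y ^ (-1 - β)
          = a * ((1 - Real.exp (-(((j : ℝ) + 1) * y))) * y ^ (-1 - β)
            - (1 - Real.exp (-((j : ℝ) * y))) * y ^ (-1 - β)) := by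
        intro y
        rw [Polynomial.eval_monomial, ← Real.exp_nat_mul,
          show -(((j : ℝ) + 1) * y) = -y + (j : ℝ) * (-y) by ring, Real.exp_add,
          show -((j : ℝ) * y) = (j : ℝ) * (-y) by ring]
        ring
      simp_rw [e]
      rw [integral_const_mul, integral_sub (levy_integrableOn hβ0 hβ1 (by positivity))
        (levy_integrableOn hβ0 hβ1 (by positivity)), levy_integral hβ0 hβ1 (by positivity),
        levy_integral hβ0 hβ1 (by positivity)]
      field_simp
    rw [hlim]
    have h1 := ((tendsto_one_sub_exp hβ0 (A := ((j : ℝ) + 1) ^ β)).sub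
      (tendsto_one_sub_exp hβ0 (A := (j : ℝ) ^ β))).const_mul a
    refine h1.congr' ?_
    filter_upwards [eventually_gt_atTop 0] with x hx
    have hx' : 0 ≤ x⁻¹ := by positivity
    have e : ∀ s : ℝ, (1 - Real.exp (-(x⁻¹ * s))) *
        (Polynomial.monomial j a).eval (Real.exp (-(x⁻¹ * s)))
        = a * (Real.exp (-(((j : ℝ) * x⁻¹) * s)) - Real.exp (-((((j : ℝ) + 1) * x⁻¹) * s))) := by
      intro s
      rw [Polynomial.eval_monomial, ← Real.exp_nat_mul,
        show -((((j : ℝ) + 1) * x⁻¹) * s) = -(x⁻¹ * s) + (j : ℝ) * (-(x⁻¹ * s)) by ring,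
        Real.exp_add, show -((j : ℝ) * x⁻¹ * s) = (j : ℝ) * (-(x⁻¹ * s)) by ring]
      ring
    simp_rw [e]
    rw [integral_const_mul, integral_sub (h.integrable_exp (by positivity))
      (h.integrable_exp (by positivity)), h.lap' hβ0 (by positivity), h.lap' hβ0 (by positivity),
      Real.mul_rpow (by positivity) hx', Real.mul_rpow (by positivity) hx',
      Real.inv_rpow hx.le, ← Real.rpow_neg hx.le]
    ring

/-- The rescaled measures `(1 - e^{-s/x}) μ(ds)` have uniformly bounded mass. -/
theorem one_sub_mass_le (h : IsStableLaw β μ) (hβ0 : 0 < β) {x : ℝ} (hx : 0 < x) :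
    x ^ β * ∫ s, (1 - Real.exp (-(x⁻¹ * s))) ∂μ ≤ 1 := by
  have := h.prob
  have hx' : 0 ≤ x⁻¹ := by positivity
  rw [integral_sub (integrable_const _) (h.integrable_exp hx'), h.lap' hβ0 hx', Real.inv_rpow hx.le]
  simp only [integral_const, probReal_univ, smul_eq_mul, mul_one]
  have h1 := Real.add_one_le_exp (-(x ^ β)⁻¹)
  have h2 : 0 < x ^ β := Real.rpow_pos_of_pos hx _
  calc x ^ β * (1 - Real.exp (-(x ^ β)⁻¹)) ≤ x ^ β * (x ^ β)⁻¹ :=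
        mul_le_mul_of_nonneg_left (by linarith) h2.le
    _ = 1 := mul_inv_cancel₀ (ne_of_gt h2)

/-- The convergence of `karamata_polynomial` for all continuous test functions, by Weierstrass
approximation; `one_sub_mass_le` controls the error uniformly in `x`. -/
theorem karamata_continuous (h : IsStableLaw β μ) (hβ0 : 0 < β) (hβ1 : β < 1)
    {k : ℝ → ℝ} (hk : Continuous k) :
    Tendsto (fun x : ℝ => x ^ β * ∫ s, (1 - Real.exp (-(x⁻¹ * s))) *
        k (Real.exp (-(x⁻¹ * s))) ∂μ) atTop
      (𝓝 (β / Real.Gamma (1 - β) *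
        ∫ y in Ioi (0 : ℝ), (1 - Real.exp (-y)) * k (Real.exp (-y)) * y ^ (-1 - β))) := by
  have hG := Real.Gamma_pos_of_pos (by linarith : 0 < 1 - β)
  rw [Metric.tendsto_nhds]
  intro ε hε
  obtain ⟨P, hP⟩ := exists_polynomial_near_of_continuousOn 0 1 k hk.continuousOn (ε / 3)
    (by positivity)
  filter_upwards [Metric.tendsto_nhds.1 (h.karamata_polynomial hβ0 hβ1 P) (ε / 3) (by positivity),
    eventually_gt_atTop 0] with x hx1 hx
  have := h.prob
  have hxβ : 0 < x ^ β := Real.rpow_pos_of_pos hx _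
  have d1 : |x ^ β * (∫ s, (1 - Real.exp (-(x⁻¹ * s))) * k (Real.exp (-(x⁻¹ * s))) ∂μ)
      - x ^ β * ∫ s, (1 - Real.exp (-(x⁻¹ * s))) * P.eval (Real.exp (-(x⁻¹ * s))) ∂μ| ≤ ε / 3 := by
    rw [← mul_sub, ← integral_sub (h.integrable_one_sub hk hx)
      (h.integrable_one_sub P.continuous hx), abs_mul, abs_of_pos hxβ]
    have hi : Integrable (fun s => (1 - Real.exp (-(x⁻¹ * s))) * (ε / 3)) μ :=
      ((integrable_const _).sub (h.integrable_exp (by positivity))).mul_const _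
    have : |∫ s, ((1 - Real.exp (-(x⁻¹ * s))) * k (Real.exp (-(x⁻¹ * s)))
        - (1 - Real.exp (-(x⁻¹ * s))) * P.eval (Real.exp (-(x⁻¹ * s)))) ∂μ|
        ≤ ∫ s, (1 - Real.exp (-(x⁻¹ * s))) * (ε / 3) ∂μ := by
      rw [← Real.norm_eq_abs]
      refine norm_integral_le_of_norm_le hi ?_
      filter_upwards [h.ae_pos] with s hs
      have hm := exp_mem_Icc hx hs
      have := hP _ hm
      rw [← mul_sub, norm_mul, Real.norm_of_nonneg (by linarith [hm.2]), Real.norm_eq_abs, abs_sub_comm]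
      exact mul_le_mul_of_nonneg_left this.le (by linarith [hm.2])
    rw [integral_mul_const] at this
    calc _ ≤ x ^ β * ((∫ s, (1 - Real.exp (-(x⁻¹ * s))) ∂μ) * (ε / 3)) :=
          mul_le_mul_of_nonneg_left this hxβ.le
      _ = (x ^ β * ∫ s, (1 - Real.exp (-(x⁻¹ * s))) ∂μ) * (ε / 3) := by ring
      _ ≤ 1 * (ε / 3) := mul_le_mul_of_nonneg_right (h.one_sub_mass_le hβ0 hx) (by positivity)
      _ = ε / 3 := one_mul _
  have d2 : |β / Real.Gamma (1 - β) * (∫ y in Ioi (0 : ℝ), (1 - Real.exp (-y)) *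
        k (Real.exp (-y)) * y ^ (-1 - β))
      - β / Real.Gamma (1 - β) * ∫ y in Ioi (0 : ℝ), (1 - Real.exp (-y)) *
        P.eval (Real.exp (-y)) * y ^ (-1 - β)| ≤ ε / 3 := by
    rw [← mul_sub, ← integral_sub (integrableOn_levy_mul hβ0 hβ1 hk)
      (integrableOn_levy_mul hβ0 hβ1 P.continuous), abs_mul,
      abs_of_pos (by positivity : 0 < β / Real.Gamma (1 - β))]
    have hi := (levy_integrableOn hβ0 hβ1 zero_le_one).mul_const (ε / 3)
    have hv := levy_integral hβ0 hβ1 zero_le_one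
    rw [Real.one_rpow, one_mul] at hv
    have : |∫ y in Ioi (0 : ℝ), ((1 - Real.exp (-y)) * k (Real.exp (-y)) * y ^ (-1 - β)
        - (1 - Real.exp (-y)) * P.eval (Real.exp (-y)) * y ^ (-1 - β))|
        ≤ ∫ y in Ioi (0 : ℝ), (1 - Real.exp (-(1 * y))) * y ^ (-1 - β) * (ε / 3) := by
      rw [← Real.norm_eq_abs]
      refine norm_integral_le_of_norm_le hi ?_
      filter_upwards [ae_restrict_mem measurableSet_Ioi] with y hy
      have hm := exp_mem_Icc one_pos hy
      simp only [inv_one, one_mul] at hm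
      have h3 := hP _ hm
      have h4 := levy_integrand_nonneg (b := β) zero_le_one hy
      rw [one_mul] at h4 ⊢
      rw [show (1 - Real.exp (-y)) * k (Real.exp (-y)) * y ^ (-1 - β)
        - (1 - Real.exp (-y)) * P.eval (Real.exp (-y)) * y ^ (-1 - β)
        = (1 - Real.exp (-y)) * y ^ (-1 - β) * (k (Real.exp (-y)) - P.eval (Real.exp (-y))) by ring,
        norm_mul, Real.norm_of_nonneg h4, Real.norm_eq_abs, abs_sub_comm]
      exact mul_le_mul_of_nonneg_left h3.le h4
    rw [integral_mul_const, hv] at this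
    calc _ ≤ β / Real.Gamma (1 - β) * (Real.Gamma (1 - β) / β * (ε / 3)) :=
          mul_le_mul_of_nonneg_left this (by positivity)
      _ = ε / 3 := by field_simp
  rw [Real.dist_eq] at hx1 ⊢
  rw [abs_lt] at hx1 ⊢
  rw [abs_le] at d1 d2
  constructor <;> linarith [hx1.1, hx1.2, d1.1, d1.2, d2.1, d2.2]

/-- A continuous cut-off in the variable `w = e^{-y}`: for `p < q` it vanishes when `y ≤ p` and equals
`1` when `y ≥ q`. -/
noncomputable def ramp (p q w : ℝ) : ℝ :=
  min 1 (max 0 ((Real.exp (-p) - w) / (Real.exp (-p) - Real.exp (-q))))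

theorem ramp_mem (p q w : ℝ) : 0 ≤ ramp p q w ∧ ramp p q w ≤ 1 :=
  ⟨le_min zero_le_one (le_max_left _ _), min_le_left _ _⟩

theorem ramp_eq_zero {p q y : ℝ} (hpq : p < q) (hy : y ≤ p) : ramp p q (Real.exp (-y)) = 0 := by
  have h1 : Real.exp (-q) < Real.exp (-p) := Real.exp_lt_exp.2 (by linarith)
  have h2 : Real.exp (-p) ≤ Real.exp (-y) := Real.exp_le_exp.2 (by linarith)
  have : (Real.exp (-p) - Real.exp (-y)) / (Real.exp (-p) - Real.exp (-q)) ≤ 0 :=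
    div_nonpos_of_nonpos_of_nonneg (by linarith) (by linarith)
  rw [ramp, max_eq_left this]; simp

theorem ramp_eq_one {p q y : ℝ} (hpq : p < q) (hy : q ≤ y) : ramp p q (Real.exp (-y)) = 1 := by
  have h1 : Real.exp (-q) < Real.exp (-p) := Real.exp_lt_exp.2 (by linarith)
  have h2 : Real.exp (-y) ≤ Real.exp (-q) := Real.exp_le_exp.2 (by linarith)
  have : 1 ≤ (Real.exp (-p) - Real.exp (-y)) / (Real.exp (-p) - Real.exp (-q)) := by
    rw [le_div_iff₀ (by linarith)]; linarith
  rw [ramp, min_eq_left (this.trans (le_max_right _ _))]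

/-- The convergence of `karamata_continuous` for a cut-off, with bounds on the limit coming from
the indicators of `y > q` below and of `y > p` above. -/
theorem karamata_ramp (h : IsStableLaw β μ) (hβ0 : 0 < β) (hβ1 : β < 1)
    {p q : ℝ} (hp : 0 < p) (hpq : p < q) :
    ∃ L : ℝ, q ^ (-β) / Real.Gamma (1 - β) ≤ L ∧ L ≤ p ^ (-β) / Real.Gamma (1 - β) ∧
      Tendsto (fun x : ℝ => x ^ β * ∫ s, ramp p q (Real.exp (-(x⁻¹ * s))) ∂μ) atTop (𝓝 L) := by
  have hG := Real.Gamma_pos_of_pos (by linarith : 0 < 1 - β)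
  have hp1 : Real.exp (-p) < 1 := by rw [Real.exp_lt_one_iff]; linarith
  -- dividing by `max (1 - w) (1 - e^{-p})` removes the weight `1 - w` wherever `ramp ≠ 0`
  have hk : Continuous fun w : ℝ => ramp p q w / max (1 - w) (1 - Real.exp (-p)) := by
    refine Continuous.div ?_ (by fun_prop) fun w =>
      (lt_of_lt_of_le (by linarith) (le_max_right (1 - w) (1 - Real.exp (-p)))).ne'
    unfold ramp; fun_prop
  have hkr : ∀ y : ℝ, (1 - Real.exp (-y)) * (ramp p q (Real.exp (-y)) /
      max (1 - Real.exp (-y)) (1 - Real.exp (-p))) = ramp p q (Real.exp (-y)) := by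
    intro y
    rcases le_total y p with hy | hy
    · simp [ramp_eq_zero hpq hy]
    · have h2 : Real.exp (-y) ≤ Real.exp (-p) := Real.exp_le_exp.2 (by linarith)
      rw [max_eq_left (by linarith)]
      have : 1 - Real.exp (-y) ≠ 0 := by linarith
      field_simp
  have hlim := h.karamata_continuous hβ0 hβ1 hk
  simp_rw [hkr] at hlim
  have hintg := integrableOn_levy_mul hβ0 hβ1 hk
  simp_rw [hkr] at hintg
  have hpow : ∀ c : ℝ, 0 < c → IntegrableOn (fun y : ℝ => y ^ (-1 - β)) (Ioi c) ∧
      ∫ y in Ioi c, y ^ (-1 - β) = c ^ (-β) / β := by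
    intro c hc
    refine ⟨integrableOn_Ioi_rpow_of_lt (by linarith) hc, ?_⟩
    rw [integral_Ioi_rpow_of_lt (by linarith) hc, show -1 - β + 1 = -β by ring]
    field_simp
  have hind : ∀ c : ℝ, 0 < c → IntegrableOn ((Ioi c).indicator fun y : ℝ => y ^ (-1 - β)) (Ioi 0) ∧
      ∫ y in Ioi (0 : ℝ), (Ioi c).indicator (fun y : ℝ => y ^ (-1 - β)) y = c ^ (-β) / β := by
    intro c hc
    refine ⟨((hpow c hc).1.integrable_indicator measurableSet_Ioi).integrableOn, ?_⟩
    rw [setIntegral_indicator measurableSet_Ioi, Ioi_inter_Ioi, max_eq_right hc.le, (hpow c hc).2]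
  refine ⟨_, ?_, ?_, hlim⟩
  · have : q ^ (-β) / β ≤ ∫ y in Ioi (0 : ℝ), ramp p q (Real.exp (-y)) * y ^ (-1 - β) := by
      rw [← (hind q (by linarith)).2]
      refine setIntegral_mono_on (hind q (by linarith)).1 hintg measurableSet_Ioi fun y hy => ?_
      by_cases hyq : y ∈ Ioi q
      · rw [indicator_of_mem hyq, ramp_eq_one hpq (le_of_lt hyq), one_mul]
      · rw [indicator_of_notMem hyq]
        exact mul_nonneg (ramp_mem _ _ _).1 (Real.rpow_nonneg (le_of_lt hy) _)
    calc q ^ (-β) / Real.Gamma (1 - β) = β / Real.Gamma (1 - β) * (q ^ (-β) / β) := by field_simp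
      _ ≤ _ := mul_le_mul_of_nonneg_left this (by positivity)
  · have : ∫ y in Ioi (0 : ℝ), ramp p q (Real.exp (-y)) * y ^ (-1 - β) ≤ p ^ (-β) / β := by
      rw [← (hind p hp).2]
      refine setIntegral_mono_on hintg (hind p hp).1 measurableSet_Ioi fun y hy => ?_
      by_cases hyq : y ∈ Ioi p
      · rw [indicator_of_mem hyq]
        exact mul_le_of_le_one_left (Real.rpow_nonneg (le_of_lt hy) _) (ramp_mem _ _ _).2
      · rw [indicator_of_notMem hyq, ramp_eq_zero hpq (not_lt.1 hyq), zero_mul]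
    calc _ ≤ β / Real.Gamma (1 - β) * (p ^ (-β) / β) :=
          mul_le_mul_of_nonneg_left this (by positivity)
      _ = p ^ (-β) / Real.Gamma (1 - β) := by field_simp

theorem integrable_ramp (h : IsStableLaw β μ) (p q x : ℝ) :
    Integrable (fun s => ramp p q (Real.exp (-(x⁻¹ * s)))) μ := by
  have := h.prob
  refine Integrable.mono' (integrable_const (1 : ℝ)) ?_ (ae_of_all _ fun s => ?_)
  · unfold ramp; fun_prop
  · rw [Real.norm_of_nonneg (ramp_mem _ _ _).1]; exact (ramp_mem _ _ _).2

/-- The tail of a stable law: `μ (x, ∞) ~ x^{-β} / Γ(1 - β)`. -/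
theorem tendsto_tail (h : IsStableLaw β μ) (hβ0 : 0 < β) (hβ1 : β < 1) :
    Tendsto (fun x : ℝ => x ^ β * μ.real (Ioi x)) atTop (𝓝 (1 / Real.Gamma (1 - β))) := by
  have hG := Real.Gamma_pos_of_pos (by linarith : 0 < 1 - β)
  have := h.prob
  have hcont : Tendsto (fun p : ℝ => p ^ (-β) / Real.Gamma (1 - β)) (𝓝 1)
      (𝓝 (1 / Real.Gamma (1 - β))) := by
    have : ContinuousAt (fun p : ℝ => p ^ (-β) / Real.Gamma (1 - β)) 1 :=
      (Real.continuousAt_rpow_const 1 (-β) (Or.inl one_ne_zero)).div_const _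
    simpa [ContinuousAt] using this
  have hone : ∀ x : ℝ, ∫ s, (Ioi x).indicator (1 : ℝ → ℝ) s ∂μ = μ.real (Ioi x) :=
    fun x => integral_indicator_one measurableSet_Ioi
  have hii : ∀ x : ℝ, Integrable ((Ioi x).indicator (1 : ℝ → ℝ)) μ :=
    fun x => (integrable_const (1 : ℝ)).indicator measurableSet_Ioi
  refine tendsto_order.2 ⟨fun A hA => ?_, fun A hA => ?_⟩
  -- the indicator of `y > 1` lies above cut-offs on `[1, q]` and below cut-offs on `[p, 1]`
  · have hev : ∀ᶠ q in 𝓝[>] (1 : ℝ), A < q ^ (-β) / Real.Gamma (1 - β) :=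
      (hcont.mono_left nhdsWithin_le_nhds).eventually (lt_mem_nhds hA)
    obtain ⟨q, hq1, hq⟩ := (hev.and self_mem_nhdsWithin).exists
    obtain ⟨L, hL, -, hlim⟩ := h.karamata_ramp hβ0 hβ1 one_pos hq
    filter_upwards [hlim.eventually (lt_mem_nhds (hq1.trans_le hL)), eventually_gt_atTop 0]
      with x hx1 hx
    refine hx1.trans_le (mul_le_mul_of_nonneg_left ?_ (Real.rpow_nonneg hx.le _))
    rw [← hone]
    refine integral_mono (h.integrable_ramp _ _ _) (hii x) fun s => ?_
    by_cases hs : s ∈ Ioi x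
    · simp only [indicator_of_mem hs, Pi.one_apply]; exact (ramp_mem _ _ _).2
    · simp only [indicator_of_notMem hs]
      refine (ramp_eq_zero hq ?_).le
      rw [inv_mul_le_iff₀ hx, mul_one]; exact not_lt.1 hs
  · have hev : ∀ᶠ q in 𝓝[<] (1 : ℝ), q ^ (-β) / Real.Gamma (1 - β) < A :=
      (hcont.mono_left nhdsWithin_le_nhds).eventually (gt_mem_nhds hA)
    have hpos : ∀ᶠ q in 𝓝[<] (1 : ℝ), 0 < q :=
      nhdsWithin_le_nhds (lt_mem_nhds one_pos)
    obtain ⟨p, ⟨hp1, hp0⟩, hp⟩ := ((hev.and hpos).and self_mem_nhdsWithin).exists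
    obtain ⟨L, -, hL, hlim⟩ := h.karamata_ramp hβ0 hβ1 hp0 hp
    filter_upwards [hlim.eventually (gt_mem_nhds (hL.trans_lt hp1)), eventually_gt_atTop 0]
      with x hx1 hx
    refine lt_of_le_of_lt (mul_le_mul_of_nonneg_left ?_ (Real.rpow_nonneg hx.le _)) hx1
    rw [← hone]
    refine integral_mono (hii x) (h.integrable_ramp _ _ _) fun s => ?_
    by_cases hs : s ∈ Ioi x
    · simp only [indicator_of_mem hs, Pi.one_apply]
      refine (ramp_eq_one hp ?_).ge
      rw [le_inv_mul_iff₀ hx, mul_one]; exact le_of_lt hs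
    · simp only [indicator_of_notMem hs]; exact (ramp_mem _ _ _).1

/-- A tail bound at every scale, which provides the domination in the limits of `scaledMean`. -/
theorem tail_le (h : IsStableLaw β μ) (hβ0 : 0 < β) {x : ℝ} (hx : 0 < x) :
    x ^ β * μ.real (Ioi x) ≤ (1 - Real.exp (-1))⁻¹ := by
  have := h.prob
  have he : Real.exp (-1) < 1 := by rw [Real.exp_lt_one_iff]; norm_num
  have h1 := h.one_sub_mass_le hβ0 hx
  have h2 : (1 - Real.exp (-1)) * μ.real (Ioi x) ≤ ∫ s, (1 - Real.exp (-(x⁻¹ * s))) ∂μ := by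
    rw [← integral_indicator_one measurableSet_Ioi, ← integral_const_mul]
    refine integral_mono_ae (((integrable_const (1 : ℝ)).indicator measurableSet_Ioi).const_mul _)
      ((integrable_const _).sub (h.integrable_exp (by positivity))) ?_
    filter_upwards [h.ae_pos] with s hs
    have hm := (exp_mem_Icc hx hs).2
    by_cases hsx : s ∈ Ioi x
    · simp only [indicator_of_mem hsx, Pi.one_apply, mul_one]
      have : Real.exp (-(x⁻¹ * s)) ≤ Real.exp (-1) := by
        refine Real.exp_le_exp.2 (neg_le_neg ?_)
        rw [le_inv_mul_iff₀ hx, mul_one]; exact le_of_lt hsx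
      linarith
    · simp only [indicator_of_notMem hsx, mul_zero]; linarith
  rw [← one_div, le_div_iff₀ (by linarith)]
  have h3 := mul_le_mul_of_nonneg_left h2 (Real.rpow_nonneg hx.le β)
  linarith

end IsStableLaw

/-! ### Averages at large scale -/

/-- The function `h ^ q * e^{-h^κ / 4}` in the logarithmic coordinate `τ = log h`. -/
noncomputable def logKernel (κ q τ : ℝ) : ℝ := Real.exp (q * τ - Real.exp (κ * τ) / 4)

theorem logKernel_integral {κ q : ℝ} (hκ : 0 < κ) (hq : 0 < q) :
    Integrable (logKernel κ q) ∧
      ∫ τ, logKernel κ q τ = 4 ^ (q / κ) * Real.Gamma (q / κ) / κ := by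
  have himg : Real.exp '' univ = Ioi 0 := by rw [image_univ, Real.range_exp]
  have h1 := integral_image_eq_integral_abs_deriv_smul (s := univ) (f := Real.exp)
    (f' := Real.exp) MeasurableSet.univ
    (fun x _ => (Real.hasDerivAt_exp x).hasDerivWithinAt) Real.exp_injective.injOn
    (fun x : ℝ => x ^ (q - 1) * Real.exp (-(1 / 4) * x ^ κ))
  rw [himg, integral_rpow_mul_exp_neg_mul_rpow hκ (by linarith) (by norm_num),
    Measure.restrict_univ] at h1
  have e : ∀ τ : ℝ, |Real.exp τ| • (Real.exp τ ^ (q - 1) *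
      Real.exp (-(1 / 4) * Real.exp τ ^ κ)) = logKernel κ q τ := by
    intro τ
    rw [abs_of_pos (Real.exp_pos _), ← Real.exp_mul, ← Real.exp_mul, smul_eq_mul, ← Real.exp_add,
      ← Real.exp_add, logKernel]
    congr 1
    rw [mul_comm κ τ]; ring
  simp_rw [e] at h1
  have hval : ∫ τ, logKernel κ q τ = 4 ^ (q / κ) * Real.Gamma (q / κ) / κ := by
    rw [← h1, show q - 1 + 1 = q by ring, show (1 / 4 : ℝ) = 4⁻¹ by norm_num,
      Real.inv_rpow (by norm_num), neg_div, Real.rpow_neg (by norm_num), inv_inv]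
    ring
  refine ⟨?_, hval⟩
  by_contra hni
  rw [integral_undef hni] at hval
  have : 0 < 4 ^ (q / κ) * Real.Gamma (q / κ) / κ := by
    have := Real.Gamma_pos_of_pos (div_pos hq hκ)
    positivity
  linarith

theorem logKernel_hasDerivAt (κ a τ : ℝ) :
    HasDerivAt (logKernel κ a) (a * logKernel κ a τ - κ / 4 * logKernel κ (a + κ) τ) τ := by
  have h1 : HasDerivAt (fun τ : ℝ => Real.exp (κ * τ)) (Real.exp (κ * τ) * κ) τ := by
    simpa using ((hasDerivAt_id' τ).const_mul κ).exp
  have h2 : HasDerivAt (fun τ : ℝ => a * τ - Real.exp (κ * τ) / 4)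
      (a - Real.exp (κ * τ) * κ / 4) τ := by
    simpa using ((hasDerivAt_id' τ).const_mul a).fun_sub (h1.div_const 4)
  refine h2.exp.congr_deriv ?_
  rw [logKernel, logKernel, show (a + κ) * τ - Real.exp (κ * τ) / 4
    = (a * τ - Real.exp (κ * τ) / 4) + κ * τ by ring, Real.exp_add _ (κ * τ)]
  ring

theorem logKernel_tendsto_atBot {κ a : ℝ} (ha : 0 < a) :
    Tendsto (logKernel κ a) atBot (𝓝 0) := by
  have h1 : Tendsto (fun τ : ℝ => Real.exp (a * τ)) atBot (𝓝 0) :=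
    Real.tendsto_exp_atBot.comp (tendsto_id.const_mul_atBot ha)
  refine squeeze_zero (fun τ => (Real.exp_pos _).le) (fun τ => ?_) h1
  refine Real.exp_le_exp.2 ?_
  have := Real.exp_pos (κ * τ)
  linarith

theorem logKernel_log {κ a x s : ℝ} (hx : 0 < x) (hs : 0 < s) :
    logKernel κ a (Real.log s - Real.log x) = (s / x) ^ a * Real.exp (-((s / x) ^ κ / 4)) := by
  have hsx : 0 < s / x := by positivity
  rw [logKernel, ← Real.log_div hs.ne' hx.ne', Real.rpow_def_of_pos hsx, Real.rpow_def_of_pos hsx,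
    ← Real.exp_add]
  congr 1
  rw [mul_comm κ]; ring

/-- The derivative of `logKernel κ a`, with the factor `e^{βτ}` removed. That factor is what normalises
the tail of a `β`-stable law in `scaledMean_eq`. -/
noncomputable def tailWeight (β κ a τ : ℝ) : ℝ :=
  a * logKernel κ (a - β) τ - κ / 4 * logKernel κ (a + κ - β) τ

theorem continuous_logKernel (κ a : ℝ) : Continuous (logKernel κ a) := by
  unfold logKernel; fun_prop

theorem continuous_tailWeight (β κ a : ℝ) : Continuous (tailWeight β κ a) := by
  have := continuous_logKernel
  unfold tailWeight
  exact ((this _ _).const_mul _).sub ((this _ _).const_mul _)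

namespace IsStableLaw

variable {β : ℝ} {μ : Measure ℝ}

/-- The rescaled average `x^β ∫ (s/x)^a e^{-(s/x)^κ/4} μ(ds)`. -/
noncomputable def scaledMean (β κ a : ℝ) (μ : Measure ℝ) (x : ℝ) : ℝ :=
  x ^ β * ∫ s, (s / x) ^ a * Real.exp (-((s / x) ^ κ / 4)) ∂μ

/-- Integration by parts (in its layer-cake form): an average against `μ` is an integral of the
tail of `μ`. -/
theorem scaledMean_eq (h : IsStableLaw β μ) {κ a : ℝ} (hκ : 0 < κ) (ha : 0 < a) {x : ℝ}
    (hx : 0 < x) :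
    scaledMean β κ a μ x = ∫ τ, tailWeight β κ a τ *
      ((x * Real.exp τ) ^ β * μ.real (Ioi (x * Real.exp τ))) := by
  have := h.prob
  set F' : ℝ → ℝ := fun τ => a * logKernel κ a τ - κ / 4 * logKernel κ (a + κ) τ with hF'
  have hF'i : Integrable F' :=
    ((logKernel_integral hκ ha).1.const_mul _).sub
      ((logKernel_integral hκ (by linarith : 0 < a + κ)).1.const_mul _)
  have hprod : Integrable (fun z : ℝ × ℝ =>
      {z : ℝ × ℝ | x * Real.exp z.2 < z.1}.indicator (fun z => F' z.2) z) (μ.prod volume) :=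
    (hF'i.comp_snd μ).indicator (measurableSet_lt (by fun_prop) (by fun_prop))
  have hsw := integral_integral_swap (μ := μ) (ν := volume)
    (f := fun s τ => {z : ℝ × ℝ | x * Real.exp z.2 < z.1}.indicator (fun z => F' z.2) (s, τ)) hprod
  have hL : ∀ᵐ s ∂μ, ∫ τ, {z : ℝ × ℝ | x * Real.exp z.2 < z.1}.indicator (fun z => F' z.2) (s, τ)
      = (s / x) ^ a * Real.exp (-((s / x) ^ κ / 4)) := by
    filter_upwards [h.ae_pos] with s hs
    have e : ∀ τ : ℝ, {z : ℝ × ℝ | x * Real.exp z.2 < z.1}.indicator (fun z => F' z.2) (s, τ)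
        = (Iio (Real.log s - Real.log x)).indicator F' τ := by
      intro τ
      have : x * Real.exp τ < s ↔ τ < Real.log s - Real.log x := by
        rw [← Real.log_div hs.ne' hx.ne', Real.lt_log_iff_exp_lt (by positivity),
          lt_div_iff₀ hx, mul_comm]
      simp only [indicator_apply, mem_ofPred_eq, mem_Iio, this]
    simp_rw [e]
    rw [integral_indicator measurableSet_Iio, ← integral_Iic_eq_integral_Iio,
      integral_Iic_of_hasDerivAt_of_tendsto' (fun τ _ => logKernel_hasDerivAt κ a τ)
      hF'i.integrableOn (logKernel_tendsto_atBot ha), sub_zero, logKernel_log hx hs]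
  rw [integral_congr_ae hL] at hsw
  rw [scaledMean, hsw, ← integral_const_mul]
  congr 1
  ext τ
  have hR : ∫ s, {z : ℝ × ℝ | x * Real.exp z.2 < z.1}.indicator (fun z => F' z.2) (s, τ) ∂μ
      = F' τ * μ.real (Ioi (x * Real.exp τ)) := by
    rw [← integral_indicator_one measurableSet_Ioi, ← integral_const_mul]
    congr 1
    ext s
    simp only [indicator_apply, mem_ofPred_eq, mem_Ioi, Pi.one_apply, mul_ite, mul_one, mul_zero]
  rw [hR, Real.mul_rpow hx.le (Real.exp_pos _).le, ← Real.exp_mul]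
  have : F' τ = tailWeight β κ a τ * Real.exp (τ * β) := by
    simp only [hF', tailWeight, logKernel, sub_mul, mul_assoc, ← Real.exp_add]
    congr 4 <;> ring
  rw [this]; ring

theorem tail_nonneg {x : ℝ} (hx : 0 < x) : 0 ≤ x ^ β * μ.real (Ioi x) :=
  mul_nonneg (Real.rpow_nonneg hx.le _) measureReal_nonneg

theorem measurable_tail [IsFiniteMeasure μ] : Measurable fun x : ℝ => μ.real (Ioi x) := by
  refine Antitone.measurable fun a b hab => ?_
  exact measureReal_mono (Ioi_subset_Ioi hab)

/-- When `a > β` the rescaled averages converge: the tail may be replaced by its asymptotics. -/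
theorem tendsto_scaledMean (h : IsStableLaw β μ) (hβ0 : 0 < β) (hβ1 : β < 1) {κ a : ℝ}
    (hκ : 0 < κ) (ha : β < a) :
    (∃ C, ∀ x, 0 < x → |scaledMean β κ a μ x| ≤ C) ∧
    Tendsto (scaledMean β κ a μ) atTop (𝓝 (1 / Real.Gamma (1 - β) *
      (β / κ * 4 ^ ((a - β) / κ) * Real.Gamma ((a - β) / κ)))) := by
  have := h.prob
  have i1 := logKernel_integral hκ (sub_pos.2 ha)
  have i2 := logKernel_integral hκ (by linarith : 0 < a + κ - β)
  have hi : Integrable (tailWeight β κ a) := (i1.1.const_mul _).sub (i2.1.const_mul _)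
  have hv : ∫ τ, tailWeight β κ a τ
      = β / κ * 4 ^ ((a - β) / κ) * Real.Gamma ((a - β) / κ) := by
    unfold tailWeight
    rw [integral_sub (i1.1.const_mul _) (i2.1.const_mul _), integral_const_mul, integral_const_mul,
      i1.2, i2.2, show (a + κ - β) / κ = (a - β) / κ + 1 by field_simp; ring,
      Real.rpow_add_one (by norm_num), Real.Gamma_add_one (div_pos (sub_pos.2 ha) hκ).ne']
    field_simp
    ring
  have hb : ∀ x, 0 < x → ∀ τ, ‖tailWeight β κ a τ *
      ((x * Real.exp τ) ^ β * μ.real (Ioi (x * Real.exp τ)))‖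
      ≤ ‖tailWeight β κ a τ‖ * (1 - Real.exp (-1))⁻¹ := by
    intro x hx τ
    have hp : 0 < x * Real.exp τ := by positivity
    rw [norm_mul, Real.norm_of_nonneg (tail_nonneg hp)]
    exact mul_le_mul_of_nonneg_left (h.tail_le hβ0 hp) (norm_nonneg _)
  refine ⟨⟨∫ τ, ‖tailWeight β κ a τ‖ * (1 - Real.exp (-1))⁻¹, fun x hx => ?_⟩, ?_⟩
  · rw [h.scaledMean_eq hκ (hβ0.trans ha) hx, ← Real.norm_eq_abs]
    exact norm_integral_le_of_norm_le (hi.norm.mul_const _) (ae_of_all _ (hb x hx))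
  · have hlim : Tendsto (fun x => ∫ τ, tailWeight β κ a τ *
        ((x * Real.exp τ) ^ β * μ.real (Ioi (x * Real.exp τ)))) atTop
        (𝓝 (∫ τ, tailWeight β κ a τ * (1 / Real.Gamma (1 - β)))) := by
      refine tendsto_integral_filter_of_dominated_convergence _ ?_ ?_
        (hi.norm.mul_const (1 - Real.exp (-1))⁻¹) ?_
      · refine Eventually.of_forall fun x => ?_
        have h1 := (continuous_tailWeight β κ a).measurable
        have h2 := (measurable_tail (μ := μ)).comp (by fun_prop : Measurable fun τ => x * Real.exp τ)
        exact (h1.mul ((by fun_prop : Measurable fun τ => (x * Real.exp τ) ^ β).mul h2)).aestronglyMeasurable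
      · filter_upwards [eventually_gt_atTop 0] with x hx
        exact ae_of_all _ (hb x hx)
      · refine ae_of_all _ fun τ => ?_
        exact ((h.tendsto_tail hβ0 hβ1).comp
          (tendsto_id.atTop_mul_const (Real.exp_pos τ))).const_mul _
    rw [integral_mul_const, hv, mul_comm] at hlim
    refine hlim.congr' ?_
    filter_upwards [eventually_gt_atTop 0] with x hx
    rw [h.scaledMean_eq hκ (hβ0.trans ha) hx]

/-- For `a = β` the weight tends to `β` as `τ → -∞`, so it is not integrable. -/
theorem tailWeight_critical (β τ : ℝ) : tailWeight β (2 * β) β τ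
    = β * (Real.exp (-(Real.exp (2 * β * τ) / 4)) * (1 - Real.exp (2 * β * τ) / 2)) := by
  rw [tailWeight, logKernel, logKernel, show β + 2 * β - β = 2 * β by ring,
    sub_self, zero_mul, zero_sub, sub_eq_add_neg (2 * β * τ), Real.exp_add]
  ring

theorem tailWeight_critical_le (hβ0 : 0 < β) (τ : ℝ) :
    |tailWeight β (2 * β) β τ| ≤ 16 * β ∧
    |tailWeight β (2 * β) β τ| ≤ 16 * β * Real.exp (-(2 * β * τ)) := by
  rw [tailWeight_critical]
  set u := Real.exp (2 * β * τ) / 4 with hu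
  have hu0 : 0 < u := by positivity
  have e1 : Real.exp (2 * β * τ) = 4 * u := by rw [hu]; ring
  have e2 : Real.exp (-(2 * β * τ)) = (4 * u)⁻¹ := by rw [Real.exp_neg, e1]
  rw [e2, e1, abs_mul, abs_mul, abs_of_pos hβ0, abs_of_pos (Real.exp_pos _), Real.exp_neg]
  have h1 : |1 - 4 * u / 2| ≤ 1 + 2 * u := by rw [abs_le]; constructor <;> linarith
  have h2 := Real.quadratic_le_exp_of_nonneg hu0.le
  have hE := Real.exp_pos u
  constructor
  · calc β * ((Real.exp u)⁻¹ * |1 - 4 * u / 2|) ≤ β * ((Real.exp u)⁻¹ * (16 * Real.exp u)) := by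
          gcongr; nlinarith
      _ = 16 * β := by field_simp
  · calc β * ((Real.exp u)⁻¹ * |1 - 4 * u / 2|)
          ≤ β * ((Real.exp u)⁻¹ * (16 * Real.exp u * (4 * u)⁻¹)) := by
          gcongr
          rw [← div_eq_mul_inv, le_div_iff₀ (by positivity)]
          nlinarith
      _ = 16 * β * (4 * u)⁻¹ := by field_simp

theorem integrable_exp_neg_mul_abs {b : ℝ} (hb : 0 < b) :
    Integrable fun θ : ℝ => Real.exp (-b * |θ|) := by
  have h1 := integral_comp_abs (f := fun θ => Real.exp (-b * θ))
  rw [integral_exp_mul_Ioi (by linarith)] at h1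
  by_contra hni
  rw [integral_undef hni] at h1
  simp only [mul_zero, Real.exp_zero] at h1
  have : 0 < 2 * (-1 / -b) := by rw [neg_div_neg_eq]; positivity
  linarith

/-- The domination used in the critical case: after the substitution `τ = (θ - 1) y`, with
`y = max 1 (log x₀)` for an average at scale `x₀`, the integrand at the point `x = x₀ e^τ` decays
exponentially in `θ`, uniformly in `y ≥ 1`. -/
theorem critical_bound (h : IsStableLaw β μ) (hβ0 : 0 < β) {y θ x : ℝ} (hy : 1 ≤ y) (hx : 0 < x)
    (hxy : x ≤ Real.exp (θ * y)) :
    ‖tailWeight β (2 * β) β ((θ - 1) * y) * (x ^ β * μ.real (Ioi x))‖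
      ≤ 16 * β * (1 - Real.exp (-1))⁻¹ * Real.exp (2 * β) * Real.exp (-β * |θ|) := by
  have := h.prob
  have hC : 1 ≤ (1 - Real.exp (-1))⁻¹ := by
    have h1 : Real.exp (-1) < 1 := by rw [Real.exp_lt_one_iff]; norm_num
    have h2 := Real.exp_pos (-1)
    rw [one_le_inv₀ (by linarith)]; linarith
  set C := (1 - Real.exp (-1))⁻¹
  obtain ⟨b1, b2⟩ := tailWeight_critical_le hβ0 ((θ - 1) * y)
  have b3 := h.tail_le hβ0 hx
  have b4 : x ^ β * μ.real (Ioi x) ≤ Real.exp (θ * y * β) := by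
    rw [Real.exp_mul]
    calc x ^ β * μ.real (Ioi x) ≤ x ^ β * 1 :=
          mul_le_mul_of_nonneg_left measureReal_le_one (Real.rpow_nonneg hx.le _)
      _ ≤ _ := by rw [mul_one]; exact Real.rpow_le_rpow hx.le hxy hβ0.le
  have b0 := tail_nonneg (β := β) (μ := μ) hx
  rw [norm_mul, Real.norm_of_nonneg b0, Real.norm_eq_abs]
  have key : ∀ A B : ℝ, |tailWeight β (2 * β) β ((θ - 1) * y)| ≤ 16 * β * Real.exp A →
      x ^ β * μ.real (Ioi x) ≤ C * Real.exp B → A + B ≤ 2 * β + -β * |θ| →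
      |tailWeight β (2 * β) β ((θ - 1) * y)| * (x ^ β * μ.real (Ioi x))
      ≤ 16 * β * C * Real.exp (2 * β) * Real.exp (-β * |θ|) := by
    intro A B hA hB hAB
    calc _ ≤ (16 * β * Real.exp A) * (C * Real.exp B) := mul_le_mul hA hB b0 (by positivity)
      _ = 16 * β * C * Real.exp (A + B) := by rw [Real.exp_add]; ring
      _ ≤ 16 * β * C * Real.exp (2 * β + -β * |θ|) := by gcongr
      _ = _ := by rw [Real.exp_add]; ring
  rcases le_total θ 0 with h0 | h0
  · refine key 0 (θ * y * β) (by simpa using b1) (b4.trans ?_) ?_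
    · exact le_mul_of_one_le_left (Real.exp_pos _).le hC
    · rw [abs_of_nonpos h0]; nlinarith [mul_nonneg (neg_nonneg.2 h0) (sub_nonneg.2 hy)]
  · rw [abs_of_nonneg h0] at key ⊢
    rcases le_total θ 1 with h1 | h1
    · refine key 0 0 (by simpa using b1) (by simpa using b3) ?_
      nlinarith
    · refine key (-(2 * β * ((θ - 1) * y))) 0 b2 (by simpa using b3) ?_
      have : θ - 1 ≤ (θ - 1) * y := le_mul_of_one_le_right (by linarith) hy
      nlinarith

/-- A bound at every scale, needed because `x` is later multiplied by a random factor. -/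
theorem critical_log_bound (h : IsStableLaw β μ) (hβ0 : 0 < β) :
    ∃ M, 0 ≤ M ∧ ∀ x, 0 < x → |scaledMean β (2 * β) β μ x| ≤ M * max 1 (Real.log x) := by
  refine ⟨∫ θ, 16 * β * (1 - Real.exp (-1))⁻¹ * Real.exp (2 * β) * Real.exp (-β * |θ|), ?_,
    fun x hx => ?_⟩
  · refine integral_nonneg fun θ => ?_
    have h1 : Real.exp (-1) < 1 := by rw [Real.exp_lt_one_iff]; norm_num
    have : 0 < (1 - Real.exp (-1))⁻¹ := inv_pos.2 (by linarith)
    positivity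
  set y := max 1 (Real.log x) with hy
  have hy1 : 1 ≤ y := le_max_left _ _
  have hy0 : 0 < y := by linarith
  rw [h.scaledMean_eq (by positivity) hβ0 hx]
  set g : ℝ → ℝ := fun τ => tailWeight β (2 * β) β τ *
      ((x * Real.exp τ) ^ β * μ.real (Ioi (x * Real.exp τ))) with hg
  have h1 : ∫ τ, g τ = y * ∫ θ, g ((θ - 1) * y) := by
    rw [integral_sub_right_eq_self (fun θ => g (θ * y)) 1, Measure.integral_comp_mul_right,
      abs_of_pos (inv_pos.2 hy0), smul_eq_mul, mul_inv_cancel_left₀ hy0.ne']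
  rw [h1, abs_mul, abs_of_pos hy0, mul_comm, ← Real.norm_eq_abs]
  refine mul_le_mul_of_nonneg_right ?_ hy0.le
  refine norm_integral_le_of_norm_le ((integrable_exp_neg_mul_abs hβ0).const_mul _)
    (ae_of_all _ fun θ => ?_)
  refine h.critical_bound hβ0 hy1 (by positivity) ?_
  nth_rewrite 1 [← Real.exp_log hx]
  rw [← Real.exp_add]
  refine Real.exp_le_exp.2 ?_
  have : Real.log x ≤ y := le_max_right _ _
  linarith

/-- In the critical case only the scales `1 < x e^τ < x` contribute to leading order, and they
contribute equally; this produces the logarithm. -/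
theorem tendsto_scaledMean_critical (h : IsStableLaw β μ) (hβ0 : 0 < β) (hβ1 : β < 1) :
    Tendsto (fun x => scaledMean β (2 * β) β μ x / Real.log x) atTop
      (𝓝 (β / Real.Gamma (1 - β))) := by
  have := h.prob
  set g : ℝ → ℝ → ℝ := fun y θ => tailWeight β (2 * β) β ((θ - 1) * y) *
      (Real.exp (θ * y) ^ β * μ.real (Ioi (Real.exp (θ * y)))) with hg
  have hlim : Tendsto (fun y => ∫ θ, g y θ) atTop
      (𝓝 (∫ θ, (Ioo (0 : ℝ) 1).indicator (fun _ => β * (1 / Real.Gamma (1 - β))) θ)) := by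
    refine tendsto_integral_filter_of_dominated_convergence _ ?_ ?_
      ((integrable_exp_neg_mul_abs hβ0).const_mul
        (16 * β * (1 - Real.exp (-1))⁻¹ * Real.exp (2 * β))) ?_
    · refine Eventually.of_forall fun y => ?_
      have h1 := (continuous_tailWeight β (2 * β) β).measurable.comp
        (by fun_prop : Measurable fun θ : ℝ => (θ - 1) * y)
      have h2 := (measurable_tail (μ := μ)).comp
        (by fun_prop : Measurable fun θ => Real.exp (θ * y))
      exact (h1.mul ((by fun_prop : Measurable fun θ =>
        Real.exp (θ * y) ^ β).mul h2)).aestronglyMeasurable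
    · filter_upwards [eventually_ge_atTop 1] with y hy
      exact ae_of_all _ fun θ => h.critical_bound hβ0 hy (Real.exp_pos _) le_rfl
    · filter_upwards [Measure.ae_ne volume (0 : ℝ), Measure.ae_ne volume (1 : ℝ)] with θ h0 h1
      have hψ := fun y => tailWeight_critical_le hβ0 ((θ - 1) * y)
      rcases lt_or_gt_of_ne h0 with h0 | h0
      · rw [indicator_of_notMem (fun hh => absurd hh.1 (not_lt.2 h0.le))]
        have hz : Tendsto (fun y => Real.exp (θ * y) ^ β * μ.real (Ioi (Real.exp (θ * y)))) atTop
            (𝓝 0) := by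
          have h2 : Tendsto (fun y : ℝ => Real.exp (θ * y) ^ β) atTop (𝓝 0) := by
            have := (Real.tendsto_exp_atBot.comp
              ((tendsto_id (α := ℝ)).const_mul_atTop_of_neg h0)).rpow_const (p := β)
                (Or.inr hβ0.le)
            simpa [Real.zero_rpow hβ0.ne'] using this
          refine squeeze_zero (fun y => tail_nonneg (Real.exp_pos _)) (fun y => ?_) h2
          exact mul_le_of_le_one_right (by positivity) measureReal_le_one
        exact bdd_le_mul_tendsto_zero' (16 * β) (Eventually.of_forall fun y => (hψ y).1) hz
      · have hT : Tendsto (fun y => Real.exp (θ * y) ^ β * μ.real (Ioi (Real.exp (θ * y)))) atTop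
            (𝓝 (1 / Real.Gamma (1 - β))) := (h.tendsto_tail hβ0 hβ1).comp
            (Real.tendsto_exp_atTop.comp (tendsto_id.const_mul_atTop h0))
        rcases lt_or_gt_of_ne h1 with h1 | h1
        · rw [indicator_of_mem (show θ ∈ Ioo (0 : ℝ) 1 from ⟨h0, h1⟩)]
          refine Tendsto.mul ?_ hT
          simp_rw [tailWeight_critical]
          have h3 : Tendsto (fun y : ℝ => Real.exp (2 * β * ((θ - 1) * y))) atTop (𝓝 0) := by
            refine Real.tendsto_exp_atBot.comp ?_
            simp_rw [← mul_assoc]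
            exact (tendsto_id (α := ℝ)).const_mul_atTop_of_neg
              (mul_neg_of_pos_of_neg (by positivity) (by linarith))
          have hc : Continuous fun v : ℝ => β * (Real.exp (-(v / 4)) * (1 - v / 2)) := by fun_prop
          have := (hc.tendsto 0).comp h3
          simpa [Function.comp_def] using this
        · rw [indicator_of_notMem (fun hh => absurd hh.2 (not_lt.2 h1.le))]
          have h3 : Tendsto (fun y => tailWeight β (2 * β) β ((θ - 1) * y)) atTop (𝓝 0) := by
            refine squeeze_zero_norm (fun y => (hψ y).2) ?_
            rw [← mul_zero (16 * β)]
            refine Tendsto.const_mul _ (Real.tendsto_exp_atBot.comp ?_)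
            simp_rw [← mul_assoc, ← neg_mul]
            exact (tendsto_id (α := ℝ)).const_mul_atTop_of_neg
              (mul_neg_of_neg_of_pos (by linarith) (by linarith))
          simpa using h3.mul hT
  rw [integral_indicator measurableSet_Ioo, setIntegral_const, Real.volume_real_Ioo_of_le zero_le_one,
    sub_zero, one_smul, ← mul_div_assoc, mul_one] at hlim
  refine (hlim.comp Real.tendsto_log_atTop).congr' ?_
  filter_upwards [eventually_gt_atTop 1] with x hx
  have hx0 : 0 < x := by linarith
  have hy : 0 < Real.log x := Real.log_pos hx
  have hgx : ∀ θ, g (Real.log x) θ = (fun τ => tailWeight β (2 * β) β τ *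
      ((x * Real.exp τ) ^ β * μ.real (Ioi (x * Real.exp τ)))) ((θ - 1) * Real.log x) := by
    intro θ
    have : Real.exp (θ * Real.log x) = x * Real.exp ((θ - 1) * Real.log x) := by
      conv_rhs => rw [← Real.exp_log hx0, ← Real.exp_add, Real.log_exp]
      congr 1; ring
    simp only [hg, this]
  simp only [Function.comp]
  simp_rw [hgx]
  rw [integral_sub_right_eq_self (fun θ => (fun τ => tailWeight β (2 * β) β τ *
      ((x * Real.exp τ) ^ β * μ.real (Ioi (x * Real.exp τ)))) (θ * Real.log x)) 1,
    Measure.integral_comp_mul_right (fun τ => tailWeight β (2 * β) β τ *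
      ((x * Real.exp τ) ^ β * μ.real (Ioi (x * Real.exp τ)))), abs_of_pos (inv_pos.2 hy),
    smul_eq_mul, ← h.scaledMean_eq (by positivity) hβ0 hx0]
  ring

end IsStableLaw

/-! ### Gaussian mixtures and the three regimes -/

/-- The Fourier transform of a Gaussian, in the normalisation of a transition density. -/
theorem integral_cos_mul_gaussian {n : ℕ} {h : ℝ} (hh : 0 < h) (z : EuclideanSpace ℝ (Fin n)) :
    (2 * Real.pi) ^ (-(n : ℝ)) * ∫ ξ : EuclideanSpace ℝ (Fin n),
      Real.cos ⟪z, ξ⟫ * Real.exp (-(h * ‖ξ‖ ^ 2))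
    = (4 * Real.pi * h) ^ (-((n : ℝ) / 2)) * Real.exp (-(‖z‖ ^ 2 / (4 * h))) := by
  have hb : 0 < (h : ℂ).re := by simpa using hh
  have hi := GaussianFourier.integrable_cexp_neg_mul_sq_norm_add hb Complex.I z
  have hv := GaussianFourier.integral_cexp_neg_mul_sq_norm_add hb Complex.I z
  have h1 := integral_re hi
  have e : ∀ ξ : EuclideanSpace ℝ (Fin n),
      RCLike.re (Complex.exp (-(h : ℂ) * (‖ξ‖ : ℂ) ^ 2 + Complex.I * (⟪z, ξ⟫ : ℝ)))
      = Real.cos ⟪z, ξ⟫ * Real.exp (-(h * ‖ξ‖ ^ 2)) := by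
    intro ξ
    have : (-(h : ℂ) * (‖ξ‖ : ℂ) ^ 2 + Complex.I * (⟪z, ξ⟫ : ℝ))
        = ((-(h * ‖ξ‖ ^ 2) : ℝ) : ℂ) + ((⟪z, ξ⟫ : ℝ) : ℂ) * Complex.I := by push_cast; ring
    rw [this, RCLike.re_eq_complex_re, Complex.exp_re]
    simp only [Complex.add_re, Complex.add_im, Complex.ofReal_re, Complex.ofReal_im,
      Complex.re_ofReal_mul, Complex.im_ofReal_mul, Complex.I_re, Complex.I_im, mul_zero, mul_one,
      add_zero, zero_add]
    ring
  simp_rw [e] at h1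
  rw [h1, hv]
  have hr : (((Real.pi : ℂ) / (h : ℂ)) ^ ((Module.finrank ℝ (EuclideanSpace ℝ (Fin n)) : ℂ) / 2) *
      Complex.exp (Complex.I ^ 2 * (‖z‖ : ℂ) ^ 2 / (4 * (h : ℂ))))
      = (((Real.pi / h) ^ ((n : ℝ) / 2) * Real.exp (-(‖z‖ ^ 2 / (4 * h))) : ℝ) : ℂ) := by
    rw [finrank_euclideanSpace_fin, Complex.ofReal_mul, Complex.ofReal_cpow (by positivity),
      Complex.ofReal_exp, Complex.I_sq]
    push_cast
    congr 2
    ring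
  rw [hr, RCLike.re_eq_complex_re, Complex.ofReal_re, ← mul_assoc]
  congr 1
  have hp := Real.pi_pos
  rw [show (4 * Real.pi * h) = (2 * Real.pi) ^ (2 : ℝ) * (Real.pi / h)⁻¹ by
    rw [Real.rpow_two]; field_simp; ring,
    Real.mul_rpow (x := (2 * Real.pi) ^ (2 : ℝ)) (by positivity) (by positivity),
    ← Real.rpow_mul (by positivity), Real.inv_rpow (by positivity),
    Real.rpow_neg (by positivity) ((n : ℝ) / 2), inv_inv]
  congr 2
  ring

/-- The rotationally symmetric stable density as a mixture of Gaussian densities. Fubini's theorem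
applies because the negative moment of order `n / 2` of `η` is finite. -/
theorem stable_density_eq {γ : ℝ} (hγ0 : 0 < γ) {η : Measure ℝ}
    (hη : IsStableLaw γ η) {n : ℕ} (hn : 1 ≤ n) {τ : ℝ} (hτ : 0 < τ)
    (z : EuclideanSpace ℝ (Fin n)) :
    (2 * Real.pi) ^ (-(n : ℝ)) * ∫ ξ : EuclideanSpace ℝ (Fin n),
      Real.cos ⟪z, ξ⟫ * Real.exp (-(τ * ‖ξ‖ ^ (2 * γ)))
    = ∫ w, (4 * Real.pi * (τ ^ (1 / γ) * w)) ^ (-((n : ℝ) / 2)) *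
        Real.exp (-(‖z‖ ^ 2 / (4 * (τ ^ (1 / γ) * w)))) ∂η := by
  have := hη.prob
  have hn' : (0 : ℝ) < n / 2 := by
    have : (1 : ℝ) ≤ n := by exact_mod_cast hn
    linarith
  have hp := Real.pi_pos
  set r := τ ^ (1 / γ) with hr
  have hr0 : 0 < r := Real.rpow_pos_of_pos hτ _
  have e1 : ∀ ξ : EuclideanSpace ℝ (Fin n), Real.cos ⟪z, ξ⟫ * Real.exp (-(τ * ‖ξ‖ ^ (2 * γ)))
      = ∫ w, Real.cos ⟪z, ξ⟫ * Real.exp (-((r * w) * ‖ξ‖ ^ 2)) ∂η := by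
    intro ξ
    have h1 := hη.lap' hγ0 (r := r * ‖ξ‖ ^ 2) (by positivity)
    rw [Real.mul_rpow hr0.le (by positivity), hr, ← Real.rpow_mul hτ.le,
      one_div_mul_cancel hγ0.ne', Real.rpow_one, ← Real.rpow_natCast,
      ← Real.rpow_mul (norm_nonneg _), ← hr] at h1
    rw [integral_const_mul]
    push_cast at h1
    rw [← h1]
    congr 2
    ext w
    norm_num
    ring
  simp_rw [e1]
  have hdom : Integrable (Function.uncurry fun (w : ℝ) (ξ : EuclideanSpace ℝ (Fin n)) =>
      Real.exp (-((r * w) * ‖ξ‖ ^ 2))) (η.prod volume) := by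
    have hval : ∀ w : ℝ, 0 < w → ∫ ξ : EuclideanSpace ℝ (Fin n), Real.exp (-((r * w) * ‖ξ‖ ^ 2))
        = (Real.pi / (r * w)) ^ ((n : ℝ) / 2) := by
      intro w hw
      have h2 := GaussianFourier.integral_rexp_neg_mul_sq_norm (V := EuclideanSpace ℝ (Fin n))
        (mul_pos hr0 hw)
      rw [finrank_euclideanSpace_fin] at h2
      rw [← h2]; simp only [neg_mul]
    refine integrable_prod_of_nonneg (Continuous.aestronglyMeasurable (by fun_prop))
      (ae_of_all _ fun w => ae_of_all _ fun ξ => (Real.exp_pos _).le) ?_ ?_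
    · filter_upwards [hη.ae_pos] with w hw
      by_contra hni
      have h2 := hval w hw
      rw [integral_undef hni] at h2
      have : 0 < (Real.pi / (r * w)) ^ ((n : ℝ) / 2) := by positivity
      linarith
    · refine ((hη.neg_moment hγ0 hn').1.const_mul ((Real.pi / r) ^ ((n : ℝ) / 2))).congr ?_
      filter_upwards [hη.ae_pos] with w hw
      rw [hval w hw, ← div_div, Real.div_rpow (by positivity) hw.le, Real.rpow_neg hw.le]
      rfl
  have hcos : Integrable (Function.uncurry fun (w : ℝ) (ξ : EuclideanSpace ℝ (Fin n)) =>
      Real.cos ⟪z, ξ⟫ * Real.exp (-((r * w) * ‖ξ‖ ^ 2))) (η.prod volume) := by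
    refine hdom.mono (Continuous.aestronglyMeasurable (by fun_prop)) (ae_of_all _ fun x => ?_)
    simp only [Function.uncurry, norm_mul]
    exact mul_le_of_le_one_left (norm_nonneg _) (Real.abs_cos_le_one _)
  rw [← integral_integral_swap hcos, ← integral_const_mul]
  refine integral_congr_ae ?_
  filter_upwards [hη.ae_pos] with w hw
  exact integral_cos_mul_gaussian (mul_pos hr0 hw) z

/-- The profile `u ^ a * e^{-u^κ/4}` of a Gaussian density as a function of its (suitably scaled)
inverse time `u`. -/
noncomputable def profile (κ a u : ℝ) : ℝ := u ^ a * Real.exp (-(u ^ κ / 4))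

theorem profile_bound {κ a u : ℝ} (hκ : 0 < κ) (ha : 0 < a) (hu : 0 < u) :
    0 ≤ profile κ a u ∧ profile κ a u ≤ (4 * (a / κ)) ^ (a / κ) := by
  refine ⟨by unfold profile; positivity, ?_⟩
  set Q := a / κ with hQ
  have hQ0 : 0 < Q := by positivity
  have h1 : u ^ κ ≤ 4 * Q * Real.exp (u ^ κ / (4 * Q)) := by
    have := Real.add_one_le_exp (u ^ κ / (4 * Q))
    calc u ^ κ = 4 * Q * (u ^ κ / (4 * Q)) := by field_simp
      _ ≤ _ := by gcongr; linarith
  have h2 : u ^ a ≤ (4 * Q) ^ Q * Real.exp (u ^ κ / 4) := by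
    calc u ^ a = (u ^ κ) ^ Q := by
          rw [← Real.rpow_mul hu.le, hQ]; congr 1; field_simp
      _ ≤ (4 * Q * Real.exp (u ^ κ / (4 * Q))) ^ Q :=
          Real.rpow_le_rpow (by positivity) h1 hQ0.le
      _ = _ := by
          rw [Real.mul_rpow (by positivity) (by positivity), ← Real.exp_mul]
          congr 2; field_simp
  rw [profile, Real.exp_neg, ← div_eq_mul_inv, div_le_iff₀ (Real.exp_pos _)]
  exact h2

theorem measurable_profile (κ a : ℝ) : Measurable (profile κ a) := by
  unfold profile; fun_prop

/-- The fundamental solution as a double mixture of Gaussians, in the similarity variable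
`X = t ρ^{-2γ/β}`. -/
theorem fundamental_eq {β γ : ℝ} (hβ0 : 0 < β) (hγ0 : 0 < γ) {μ η : Measure ℝ}
    (hμ : IsStableLaw β μ) (hη : IsStableLaw γ η) {n : ℕ} (hn : 1 ≤ n)
    {z : EuclideanSpace ℝ (Fin n)} (hz : z ≠ 0) {t : ℝ} (ht : 0 < t) :
    ∫ s in Ioi (0 : ℝ), ((2 * Real.pi) ^ (-(n : ℝ)) * ∫ ξ : EuclideanSpace ℝ (Fin n),
      Real.cos ⟪z, ξ⟫ * Real.exp (-(t ^ β * s ^ (-β) * ‖ξ‖ ^ (2 * γ)))) ∂μ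
    = (4 * Real.pi) ^ (-((n : ℝ) / 2)) * ‖z‖ ^ (-(n : ℝ)) *
      ∫ s, ∫ w, profile (β / γ) (β / γ * (n / 2))
        (s / (‖z‖ ^ (-(2 * γ / β)) * t * w ^ (γ / β))) ∂η ∂μ := by
  have hρ : 0 < ‖z‖ := norm_pos_iff.2 hz
  set ρ := ‖z‖ with hρdef
  have hp := Real.pi_pos
  have hres : μ.restrict (Ioi 0) = μ :=
    Measure.restrict_eq_self_of_ae_mem hμ.ae_pos
  rw [hres, ← integral_const_mul]
  refine integral_congr_ae ?_
  filter_upwards [hμ.ae_pos] with s hs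
  have hτ : 0 < t ^ β * s ^ (-β) := by positivity
  rw [stable_density_eq hγ0 hη hn hτ, ← integral_const_mul]
  refine integral_congr_ae ?_
  filter_upwards [hη.ae_pos] with w hw
  have e1 : (t ^ β * s ^ (-β)) ^ (1 / γ) = t ^ (β / γ) * s ^ (-(β / γ)) := by
    rw [Real.mul_rpow (by positivity) (by positivity), ← Real.rpow_mul ht.le, ← Real.rpow_mul hs.le]
    congr 2 <;> ring
  have e2 : (s / (ρ ^ (-(2 * γ / β)) * t * w ^ (γ / β))) ^ (β / γ)
      = ρ ^ 2 * (t ^ (β / γ) * s ^ (-(β / γ)) * w)⁻¹ := by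
    rw [Real.div_rpow hs.le (by positivity), Real.mul_rpow (by positivity) (by positivity),
      Real.mul_rpow (by positivity) ht.le, ← Real.rpow_mul hρ.le, ← Real.rpow_mul hw.le,
      show -(2 * γ / β) * (β / γ) = -2 by field_simp, show γ / β * (β / γ) = 1 by field_simp,
      Real.rpow_one, Real.rpow_neg hρ.le, Real.rpow_neg hs.le, Real.rpow_two]
    field_simp
  rw [profile, Real.rpow_mul (by positivity), e2, e1]
  set h := t ^ (β / γ) * s ^ (-(β / γ)) * w with hh
  have hh0 : 0 < h := by positivity
  have e3 : (ρ ^ 2 * h⁻¹) ^ ((n : ℝ) / 2) = ρ ^ (n : ℝ) * h ^ (-((n : ℝ) / 2)) := by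
    rw [Real.mul_rpow (by positivity) (by positivity), Real.inv_rpow hh0.le,
      ← Real.rpow_neg hh0.le, ← Real.rpow_natCast ρ 2, ← Real.rpow_mul hρ.le]
    congr 2; push_cast; ring
  have e4 : ρ ^ 2 * h⁻¹ / 4 = ρ ^ 2 / (4 * h) := by field_simp
  have : 0 < ρ ^ (n : ℝ) := by positivity
  rw [e3, e4, Real.mul_rpow (by positivity) hh0.le, ← hρdef, Real.rpow_neg hρ.le (n : ℝ)]
  field_simp

/-- Integrating over `μ` first expresses the double mixture through the averages `scaledMean`. -/
theorem fundamental_swap {β κ a : ℝ} (hκ : 0 < κ) (ha : 0 < a) {δ : ℝ} {μ η : Measure ℝ} {α : ℝ}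
    (hμ : IsStableLaw β μ) (hη : IsStableLaw α η) {X : ℝ} (hX : 0 < X) :
    ∫ s, ∫ w, profile κ a (s / (X * w ^ δ)) ∂η ∂μ
    = X ^ (-β) * ∫ w, w ^ (-(δ * β)) * IsStableLaw.scaledMean β κ a μ (X * w ^ δ) ∂η := by
  have := hμ.prob
  have := hη.prob
  rw [integral_integral_swap, ← integral_const_mul]
  · refine integral_congr_ae ?_
    filter_upwards [hη.ae_pos] with w hw
    have hwδ : 0 < w ^ δ := by positivity
    rw [IsStableLaw.scaledMean, Real.mul_rpow hX.le hwδ.le, ← Real.rpow_mul hw.le,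
      Real.rpow_neg hX.le, Real.rpow_neg hw.le]
    have h1 : 0 < X ^ β := by positivity
    have h2 : 0 < w ^ (δ * β) := by positivity
    unfold profile
    field_simp
  · refine Integrable.mono' (integrable_const ((4 * (a / κ)) ^ (a / κ)))
      ((measurable_profile κ a).comp (by fun_prop)).aestronglyMeasurable ?_
    have hae : ∀ᵐ x ∂(μ.prod η), 0 < x.1 ∧ 0 < x.2 :=
      (Measure.quasiMeasurePreserving_fst.ae hμ.ae_pos).and
        (Measure.quasiMeasurePreserving_snd.ae hη.ae_pos)
    filter_upwards [hae] with x hx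
    obtain ⟨hx1, hx2⟩ := hx
    have := profile_bound hκ ha (by positivity : 0 < x.1 / (X * x.2 ^ δ))
    simp only [Function.uncurry]
    rw [Real.norm_of_nonneg this.1]; exact this.2

theorem measurable_scaledMean {β κ a : ℝ} {μ : Measure ℝ} [SFinite μ] :
    Measurable (IsStableLaw.scaledMean β κ a μ) := by
  unfold IsStableLaw.scaledMean
  refine Measurable.mul (by fun_prop) ?_
  have : StronglyMeasurable (Function.uncurry fun x s : ℝ =>
      (s / x) ^ a * Real.exp (-((s / x) ^ κ / 4))) :=
    Measurable.stronglyMeasurable (by fun_prop)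
  exact (this.integral_prod_right (ν := μ)).measurable

/-- The case `a = κ/2 < β`: the limit is a product of moments, by monotone domination of the
exponential by `1`. -/
theorem tendsto_mean_low {β κ α : ℝ} (hβ0 : 0 < β) (hβ1 : β < 1) (hκ : 0 < κ) (hκβ : κ / 2 < β)
    (hα0 : 0 < α) {μ η : Measure ℝ} (hμ : IsStableLaw β μ) (hη : IsStableLaw α η) :
    Tendsto (fun X : ℝ => X ^ (κ / 2) * ∫ s, ∫ w, profile κ (κ / 2) (s / (X * w ^ (1 / κ))) ∂η ∂μ)
      atTop (𝓝 (Real.Gamma (1 - κ / 2 / β) / Real.Gamma (1 - κ / 2) *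
        (Real.Gamma (1 / 2 / α) / (α * Real.Gamma (1 / 2))))) := by
  have := hμ.prob
  have := hη.prob
  obtain ⟨p1, p2⟩ := hμ.pos_moment hβ0 hβ1 (half_pos hκ) hκβ
  obtain ⟨n1, n2⟩ := hη.neg_moment hα0 (b := 1 / 2) (by norm_num)
  have hae : ∀ᵐ x ∂(μ.prod η), 0 < x.1 ∧ 0 < x.2 :=
    (Measure.quasiMeasurePreserving_fst.ae hμ.ae_pos).and
      (Measure.quasiMeasurePreserving_snd.ae hη.ae_pos)
  have key : ∀ X : ℝ, 0 < X → ∀ x : ℝ × ℝ, 0 < x.1 ∧ 0 < x.2 →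
      X ^ (κ / 2) * profile κ (κ / 2) (x.1 / (X * x.2 ^ (1 / κ)))
      = x.1 ^ (κ / 2) * x.2 ^ (-(1 / 2 : ℝ)) *
        Real.exp (-(X ^ (-κ) * (x.1 ^ κ * x.2⁻¹ / 4))) := by
    rintro X hX ⟨s, w⟩ ⟨hs, hw⟩
    simp only at hs hw ⊢
    have e : ∀ b, (s / (X * w ^ (1 / κ))) ^ b = s ^ b * (X ^ (-b) * w ^ (-(b / κ))) := by
      intro b
      rw [Real.div_rpow hs.le (by positivity), Real.mul_rpow hX.le (by positivity),
        ← Real.rpow_mul hw.le, Real.rpow_neg hX.le, Real.rpow_neg hw.le, ← mul_inv,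
        div_eq_mul_inv, one_div_mul_eq_div]
    have h1 : X ^ (κ / 2) * X ^ (-(κ / 2)) = 1 := by
      rw [← Real.rpow_add hX, add_neg_cancel, Real.rpow_zero]
    rw [profile, e, e, div_self hκ.ne', Real.rpow_neg_one, show κ / 2 / κ = 1 / 2 by field_simp,
      show s ^ κ * (X ^ (-κ) * w⁻¹) / 4 = X ^ (-κ) * (s ^ κ * w⁻¹ / 4) by ring]
    linear_combination (s ^ (κ / 2) * w ^ (-(1 / 2 : ℝ)) *
      Real.exp (-(X ^ (-κ) * (s ^ κ * w⁻¹ / 4)))) * h1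
  have hbase : Integrable (fun x : ℝ × ℝ => x.1 ^ (κ / 2) * x.2 ^ (-(1 / 2 : ℝ))) (μ.prod η) :=
    p1.mul_prod n1
  have hle : ∀ X : ℝ, 0 < X → ∀ᵐ x ∂(μ.prod η),
      ‖X ^ (κ / 2) * profile κ (κ / 2) (x.1 / (X * x.2 ^ (1 / κ)))‖
        ≤ x.1 ^ (κ / 2) * x.2 ^ (-(1 / 2 : ℝ)) := by
    intro X hX
    filter_upwards [hae] with x hx
    have hx1 := hx.1
    have hx2 := hx.2
    rw [key X hX x hx, Real.norm_of_nonneg (by positivity)]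
    refine mul_le_of_le_one_right (by positivity) (Real.exp_le_one_iff.2 ?_)
    have : 0 ≤ X ^ (-κ) * (x.1 ^ κ * x.2⁻¹ / 4) := by positivity
    linarith
  have hmeas : ∀ X : ℝ, AEStronglyMeasurable (fun x : ℝ × ℝ =>
      X ^ (κ / 2) * profile κ (κ / 2) (x.1 / (X * x.2 ^ (1 / κ)))) (μ.prod η) := fun X =>
    (((measurable_profile κ (κ / 2)).comp (by fun_prop :
      Measurable fun x : ℝ × ℝ => x.1 / (X * x.2 ^ (1 / κ)))).const_mul _).aestronglyMeasurable
  have hlim : Tendsto (fun X : ℝ => ∫ x : ℝ × ℝ,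
      X ^ (κ / 2) * profile κ (κ / 2) (x.1 / (X * x.2 ^ (1 / κ))) ∂(μ.prod η)) atTop
      (𝓝 (∫ x : ℝ × ℝ, x.1 ^ (κ / 2) * x.2 ^ (-(1 / 2 : ℝ)) ∂(μ.prod η))) := by
    refine tendsto_integral_filter_of_dominated_convergence _ (Eventually.of_forall hmeas) ?_
      hbase ?_
    · filter_upwards [eventually_gt_atTop 0] with X hX using hle X hX
    · filter_upwards [hae] with x hx
      have h1 : Tendsto (fun X : ℝ => x.1 ^ (κ / 2) * x.2 ^ (-(1 / 2 : ℝ)) *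
          Real.exp (-(X ^ (-κ) * (x.1 ^ κ * x.2⁻¹ / 4)))) atTop
          (𝓝 (x.1 ^ (κ / 2) * x.2 ^ (-(1 / 2 : ℝ)) *
            Real.exp (-(0 * (x.1 ^ κ * x.2⁻¹ / 4))))) :=
        (Real.continuous_exp.tendsto _ |>.comp
          ((tendsto_rpow_neg_atTop hκ).mul_const _).neg).const_mul _
      rw [zero_mul, neg_zero, Real.exp_zero, mul_one] at h1
      refine h1.congr' ?_
      filter_upwards [eventually_gt_atTop 0] with X hX
      exact (key X hX x hx).symm
  rw [integral_prod_mul (fun s : ℝ => s ^ (κ / 2)) (fun w : ℝ => w ^ (-(1 / 2 : ℝ))), p2, n2]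
    at hlim
  refine hlim.congr' ?_
  filter_upwards [eventually_gt_atTop 0] with X hX
  rw [integral_prod _ (hbase.mono' (hmeas X) (hle X hX))]
  simp_rw [integral_const_mul]

/-- The case `a > β`: the tail of `μ` governs, and gives the order `X^{-β}`. -/
theorem tendsto_mean_high {β κ a α : ℝ} (hβ0 : 0 < β) (hβ1 : β < 1) (hκ : 0 < κ) (ha : β < a)
    (hα0 : 0 < α) {μ η : Measure ℝ} (hμ : IsStableLaw β μ) (hη : IsStableLaw α η) :
    Tendsto (fun X : ℝ => X ^ β * ∫ s, ∫ w, profile κ a (s / (X * w ^ (1 / κ))) ∂η ∂μ)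
      atTop (𝓝 (Real.Gamma (β / κ / α) / (α * Real.Gamma (β / κ)) * (1 / Real.Gamma (1 - β) *
      (β / κ * 4 ^ ((a - β) / κ) * Real.Gamma ((a - β) / κ))))) := by
  have := hμ.prob
  have := hη.prob
  obtain ⟨⟨C, hC⟩, hL⟩ := hμ.tendsto_scaledMean hβ0 hβ1 hκ ha
  obtain ⟨n1, n2⟩ := hη.neg_moment hα0 (b := β / κ) (by positivity)
  have hlim : Tendsto (fun X : ℝ => ∫ w, w ^ (-(β / κ)) *
      IsStableLaw.scaledMean β κ a μ (X * w ^ (1 / κ)) ∂η) atTop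
      (𝓝 (∫ w, w ^ (-(β / κ)) * (1 / Real.Gamma (1 - β) *
      (β / κ * 4 ^ ((a - β) / κ) * Real.Gamma ((a - β) / κ))) ∂η)) := by
    refine tendsto_integral_filter_of_dominated_convergence _ (Eventually.of_forall fun X => ?_) ?_
      (n1.mul_const C) ?_
    · exact ((by fun_prop : Measurable fun w : ℝ => w ^ (-(β / κ))).mul
        (measurable_scaledMean.comp (by fun_prop))).aestronglyMeasurable
    · filter_upwards [eventually_gt_atTop 0] with X hX
      filter_upwards [hη.ae_pos] with w hw
      rw [norm_mul, Real.norm_of_nonneg (by positivity)]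
      exact mul_le_mul_of_nonneg_left (hC _ (by positivity)) (by positivity)
    · filter_upwards [hη.ae_pos] with w hw
      exact (hL.comp (tendsto_id.atTop_mul_const (by positivity))).const_mul _
  rw [integral_mul_const, n2] at hlim
  refine hlim.congr' ?_
  filter_upwards [eventually_gt_atTop 0] with X hX
  rw [fundamental_swap hκ (hβ0.trans ha) hμ hη hX, ← mul_assoc, ← Real.rpow_add hX,
    add_neg_cancel, Real.rpow_zero, one_mul, one_div_mul_eq_div]

/-- The case `a = β`, `κ = 2β`: the random factor `w ^ (1 / κ)` does not affect `log X` to leading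
order, and the bound `critical_log_bound` together with `log w ≤ 2 √w` provides the domination. -/
theorem tendsto_mean_critical {β α : ℝ} (hβ0 : 0 < β) (hβ1 : β < 1)
    (hα0 : 0 < α) {μ η : Measure ℝ} (hμ : IsStableLaw β μ) (hη : IsStableLaw α η) :
    Tendsto (fun X : ℝ => X ^ β *
        (∫ s, ∫ w, profile (2 * β) β (s / (X * w ^ (1 / (2 * β)))) ∂η ∂μ) / Real.log X)
      atTop (𝓝 (Real.Gamma (1 / 2 / α) / (α * Real.Gamma (1 / 2)) *
        (β / Real.Gamma (1 - β)))) := by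
  have := hμ.prob
  have := hη.prob
  obtain ⟨M, hM0, hM⟩ := hμ.critical_log_bound hβ0
  have hL := hμ.tendsto_scaledMean_critical hβ0 hβ1
  obtain ⟨n1, n2⟩ := hη.neg_moment hα0 (b := 1 / 2) (by norm_num)
  have hlim : Tendsto (fun X : ℝ => ∫ w, w ^ (-(1 / 2 : ℝ)) *
      (IsStableLaw.scaledMean β (2 * β) β μ (X * w ^ (1 / (2 * β))) / Real.log X) ∂η) atTop
      (𝓝 (∫ w, w ^ (-(1 / 2 : ℝ)) * (β / Real.Gamma (1 - β)) ∂η)) := by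
    refine tendsto_integral_filter_of_dominated_convergence _ (Eventually.of_forall fun X => ?_) ?_
      ((n1.mul_const M).add (integrable_const (M * (1 / β)))) ?_
    · exact ((by fun_prop : Measurable fun w : ℝ => w ^ (-(1 / 2 : ℝ))).mul
        ((measurable_scaledMean.comp (by fun_prop :
          Measurable fun w : ℝ => X * w ^ (1 / (2 * β)))).div_const _)).aestronglyMeasurable
    · filter_upwards [eventually_gt_atTop 0,
        Real.tendsto_log_atTop.eventually (eventually_ge_atTop 1)] with X hX hX1
      filter_upwards [hη.ae_pos] with w hw
      have b1 := hM (X * w ^ (1 / (2 * β))) (by positivity)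
      have b2 : max 1 (Real.log (X * w ^ (1 / (2 * β))))
          ≤ Real.log X * (1 + 1 / β * w ^ (1 / 2 : ℝ)) := by
        have hw2 : 0 < w ^ (1 / 2 : ℝ) := by positivity
        have hb : 0 < 1 / β * w ^ (1 / 2 : ℝ) := by positivity
        refine max_le ?_ ?_
        · nlinarith
        · rw [Real.log_mul hX.ne' (by positivity), Real.log_rpow hw]
          have h3 := Real.log_le_rpow_div hw.le (ε := 1 / 2) (by norm_num)
          have h4 : 1 / (2 * β) * Real.log w ≤ 1 / β * w ^ (1 / 2 : ℝ) := by
            calc 1 / (2 * β) * Real.log w ≤ 1 / (2 * β) * (w ^ (1 / 2 : ℝ) / (1 / 2)) :=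
                  mul_le_mul_of_nonneg_left h3 (by positivity)
              _ = _ := by field_simp
          nlinarith
      have h5 : w ^ (-(1 / 2 : ℝ)) * w ^ (1 / 2 : ℝ) = 1 := by
        rw [← Real.rpow_add hw, neg_add_cancel, Real.rpow_zero]
      have hXp : 0 < Real.log X := by linarith
      rw [norm_mul, Real.norm_of_nonneg (by positivity), norm_div, Real.norm_of_nonneg hXp.le,
        Real.norm_eq_abs]
      calc w ^ (-(1 / 2 : ℝ)) *
            (|IsStableLaw.scaledMean β (2 * β) β μ (X * w ^ (1 / (2 * β)))| / Real.log X)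
          ≤ w ^ (-(1 / 2 : ℝ)) * (M * (Real.log X * (1 + 1 / β * w ^ (1 / 2 : ℝ))) / Real.log X) := by
            gcongr
            exact b1.trans (mul_le_mul_of_nonneg_left b2 hM0)
        _ = w ^ (-(1 / 2 : ℝ)) * M
            + M * (1 / β) * (w ^ (-(1 / 2 : ℝ)) * w ^ (1 / 2 : ℝ)) := by
            field_simp
        _ = _ := by rw [h5, mul_one]; rfl
    · filter_upwards [hη.ae_pos] with w hw
      refine Tendsto.const_mul _ ?_
      set c := w ^ (1 / (2 * β)) with hc
      have hc0 : 0 < c := by positivity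
      have h1 := hL.comp (tendsto_id.atTop_mul_const hc0)
      have h2 : Tendsto (fun X : ℝ => Real.log (X * c) / Real.log X) atTop (𝓝 1) := by
        have h3 : Tendsto (fun X : ℝ => 1 + Real.log c * (Real.log X)⁻¹) atTop
            (𝓝 (1 + Real.log c * 0)) :=
          ((tendsto_inv_atTop_zero.comp Real.tendsto_log_atTop).const_mul _).const_add _
        rw [mul_zero, add_zero] at h3
        refine h3.congr' ?_
        filter_upwards [eventually_gt_atTop 1] with X hX
        have := Real.log_pos hX
        rw [Real.log_mul (by positivity) hc0.ne']
        field_simp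
      have h4 := h1.mul h2
      rw [mul_one] at h4
      refine h4.congr' ?_
      filter_upwards [((tendsto_id (α := ℝ)).atTop_mul_const hc0).eventually
        (eventually_gt_atTop 1)] with X hX
      have : Real.log (X * c) ≠ 0 := (Real.log_pos hX).ne'
      simp only [Function.comp, id]
      field_simp
  rw [integral_mul_const, n2] at hlim
  refine hlim.congr' ?_
  filter_upwards [eventually_gt_atTop 0] with X hX
  rw [fundamental_swap (by positivity) hβ0 hμ hη hX, ← mul_assoc, ← Real.rpow_add hX,
    add_neg_cancel, Real.rpow_zero, one_mul, ← integral_div]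
  have e : 1 / (2 * β) * β = 1 / 2 := by field_simp
  rw [e]
  simp_rw [mul_div_assoc]

/-! ### Asymptotics of the fundamental solution -/

theorem exists_ratio_bound {G : ℝ → ℝ} {L c C ε : ℝ} (hG : Tendsto G atTop (𝓝 L))
    (hc : c * L = C) (hC : C ≠ 0) (hε : 0 < ε) :
    ∃ R : ℝ, 0 < R ∧ ∀ X, R ≤ X → |c * G X / C - 1| ≤ ε := by
  have h1 : Tendsto (fun X => c * G X / C) atTop (𝓝 1) := by
    have := (hG.const_mul c).div_const C
    rwa [hc, div_self hC] at this
  obtain ⟨R, hR⟩ := eventually_atTop.1 (Metric.tendsto_nhds.1 h1 ε hε)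
  refine ⟨max R 1, by positivity, fun X hX => ?_⟩
  have := hR X ((le_max_left _ _).trans hX)
  rw [Real.dist_eq] at this
  exact this.le

theorem rpow_neg_half_four_pi : (4 * Real.pi) ^ (-((1 : ℝ) / 2)) = 1 / (2 * √Real.pi) := by
  rw [Real.rpow_neg (by positivity), ← Real.sqrt_eq_rpow, Real.sqrt_mul (by norm_num),
    show (4 : ℝ) = 2 ^ 2 by norm_num, Real.sqrt_sq (by norm_num), one_div]

theorem stmt_13
    (β γ : ℝ) (hβ0 : 0 < β) (hβ1 : β < 1) (hγ0 : 0 < γ) (hγ1 : γ < 1)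
    (n : ℕ) (hn : 1 ≤ n)
    (μ : Measure ℝ) (hprob : IsProbabilityMeasure μ)
    (hsupp : μ (Set.Iic 0) = 0)
    (hlap : ∀ r : ℝ, 0 < r →
      ∫ s in Set.Ioi (0:ℝ), Real.exp (-(r * s)) ∂μ = Real.exp (-(r ^ β)))
    (p2γ : ℝ → EuclideanSpace ℝ (Fin n) → ℝ)
    (hp2γ : ∀ s : ℝ, 0 < s → ∀ z : EuclideanSpace ℝ (Fin n),
      p2γ s z = (2 * Real.pi) ^ (-(n:ℝ)) *
        ∫ ξ : EuclideanSpace ℝ (Fin n),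
          Real.cos ⟪z, ξ⟫ * Real.exp (-(s * ‖ξ‖ ^ (2*γ))))
    (p : ℝ → EuclideanSpace ℝ (Fin n) → EuclideanSpace ℝ (Fin n) → ℝ)
    (hp : ∀ t : ℝ, 0 < t → ∀ x y : EuclideanSpace ℝ (Fin n),
      p t x y = ∫ s in Set.Ioi (0:ℝ), p2γ (t ^ β * s ^ (-β)) (x - y) ∂μ) :
    ((n = 1 ∧ 1/2 < γ) →
      ∀ ε : ℝ, 0 < ε → ∃ R : ℝ, 0 < R ∧ ∀ t : ℝ, 0 < t →
        ∀ x y : EuclideanSpace ℝ (Fin n), x ≠ y →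
        R ≤ dist x y ^ (-(2*γ/β)) * t →
        |p t x y /
          (Real.Gamma (1/(2*γ)) * Real.Gamma (1 - 1/(2*γ)) /
              (2 * Real.pi * γ * Real.Gamma (1 - β/(2*γ))) *
            t ^ (-(β/(2*γ)))) - 1| ≤ ε) ∧
    ((n = 1 ∧ γ = 1/2) →
      ∀ ε : ℝ, 0 < ε → ∃ R : ℝ, 0 < R ∧ ∀ t : ℝ, 0 < t →
        ∀ x y : EuclideanSpace ℝ (Fin n), x ≠ y →
        R ≤ dist x y ^ (-(2*γ/β)) * t →
        |p t x y /
          (β / (Real.pi * Real.Gamma (1 - β)) * t ^ (-β) *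
            Real.log (dist x y ^ (-(1/β)) * t)) - 1| ≤ ε) ∧
    (2*γ < (n:ℝ) →
      ∀ ε : ℝ, 0 < ε → ∃ R : ℝ, 0 < R ∧ ∀ t : ℝ, 0 < t →
        ∀ x y : EuclideanSpace ℝ (Fin n), x ≠ y →
        R ≤ dist x y ^ (-(2*γ/β)) * t →
        |p t x y /
          (2 * γ * Real.Gamma (((n:ℝ) - 2*γ)/2) /
              (2 ^ (1 + 2*γ) * Real.pi ^ ((n:ℝ)/2) * Real.Gamma (1 - β) *
                Real.Gamma (1 + γ)) *
            (dist x y ^ (2*γ - (n:ℝ)) * t ^ (-β))) - 1| ≤ ε) := by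
  have hμ : IsStableLaw β μ := by
    refine ⟨hprob, hsupp, fun r hr => ?_⟩
    have hae : ∀ᵐ s ∂μ, s ∈ Ioi (0 : ℝ) := by
      rw [ae_iff]; convert hsupp using 2; ext s; simp
    rw [← hlap r hr, Measure.restrict_eq_self_of_ae_mem hae]
  obtain ⟨η, hη⟩ := exists_stableLaw hγ0 hγ1
  have hπ := Real.pi_pos
  have hΓβ := Real.Gamma_pos_of_pos (by linarith : 0 < 1 - β)
  set I : ℝ → ℝ := fun X => ∫ s, ∫ w, profile (β / γ) (β / γ * (n / 2))
    (s / (X * w ^ (γ / β))) ∂η ∂μ with hI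
  have hpI : ∀ t : ℝ, 0 < t → ∀ x y : EuclideanSpace ℝ (Fin n), x ≠ y →
      p t x y = (4 * Real.pi) ^ (-((n : ℝ) / 2)) * dist x y ^ (-(n : ℝ)) *
        I (dist x y ^ (-(2 * γ / β)) * t) := by
    intro t ht x y hxy
    rw [hp t ht, dist_eq_norm, ← fundamental_eq hβ0 hγ0 hμ hη hn (sub_ne_zero.2 hxy) ht]
    refine setIntegral_congr_fun measurableSet_Ioi fun s hs => ?_
    have hs' : 0 < s := hs
    exact hp2γ _ (by positivity) _
  refine ⟨?_, ?_, ?_⟩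
  · rintro ⟨rfl, hγ⟩ ε hε
    have hlt : 1 / (2 * γ) < 1 := by rw [div_lt_one (by positivity)]; linarith
    have hβlt : β / (2 * γ) < 1 := by rw [div_lt_one (by positivity)]; linarith
    have g1 := Real.Gamma_pos_of_pos (sub_pos.2 hlt)
    have g2 := Real.Gamma_pos_of_pos (sub_pos.2 hβlt)
    have g3 := Real.Gamma_pos_of_pos (by positivity : 0 < 1 / (2 * γ))
    have hlim := tendsto_mean_low (κ := β / γ) hβ0 hβ1 (by positivity)
      (by rw [div_div, div_lt_iff₀ (by positivity)]; nlinarith) hγ0 hμ hη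
    obtain ⟨R, hR, hbd⟩ := exists_ratio_bound
      (c := (4 * Real.pi) ^ (-(((1 : ℕ) : ℝ) / 2)))
      (C := Real.Gamma (1/(2*γ)) * Real.Gamma (1 - 1/(2*γ)) /
              (2 * Real.pi * γ * Real.Gamma (1 - β/(2*γ)))) hlim (by
        rw [show β / γ / 2 / β = 1 / (2 * γ) by field_simp,
          show β / γ / 2 = β / (2 * γ) by field_simp, show 1 / 2 / γ = 1 / (2 * γ) by field_simp,
          Real.Gamma_one_half_eq, Nat.cast_one, rpow_neg_half_four_pi]
        field_simp
        rw [Real.sq_sqrt hπ.le]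
        ring) (by positivity) hε
    refine ⟨R, hR, fun t ht x y hxy hX => ?_⟩
    have hd : 0 < dist x y := dist_pos.2 hxy
    have hb := hbd _ hX
    convert hb using 3
    rw [hpI t ht x y hxy, hI]
    have e1 : 1 / (β / γ) = γ / β := by field_simp
    have e2 : β / γ * (((1 : ℕ) : ℝ) / 2) = β / γ / 2 := by push_cast; ring
    simp only [e1, e2]
    rw [Real.mul_rpow (by positivity) ht.le, ← Real.rpow_mul hd.le,
      show -(2 * γ / β) * (β / γ / 2) = -((1 : ℕ) : ℝ) by push_cast; field_simp,
      show β / (2 * γ) = β / γ / 2 by field_simp, Real.rpow_neg ht.le]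
    have : 0 < t ^ (β / γ / 2) := by positivity
    field_simp
  · rintro ⟨rfl, rfl⟩ ε hε
    have hlim := tendsto_mean_critical hβ0 hβ1 (α := 1 / 2) (by norm_num) hμ hη
    obtain ⟨R, hR, hbd⟩ := exists_ratio_bound
      (c := (4 * Real.pi) ^ (-(((1 : ℕ) : ℝ) / 2)))
      (C := β / (Real.pi * Real.Gamma (1 - β))) hlim (by
        rw [div_self (by norm_num), Real.Gamma_one, Real.Gamma_one_half_eq, Nat.cast_one,
          rpow_neg_half_four_pi]
        field_simp
        rw [Real.sq_sqrt hπ.le]) (by positivity) hε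
    refine ⟨R, hR, fun t ht x y hxy hX => ?_⟩
    have hd : 0 < dist x y := dist_pos.2 hxy
    have hb := hbd _ hX
    convert hb using 3
    rw [hpI t ht x y hxy, hI]
    have e1 : 1 / 2 / β = 1 / (2 * β) := by field_simp
    have e2 : 2 * β * (((1 : ℕ) : ℝ) / 2) = β := by push_cast; ring
    have e3 : β / (1 / 2) = 2 * β := by ring
    have e4 : 2 * (1 / 2) / β = 1 / β := by norm_num
    simp only [e1, e3, e2, e4]
    set J := ∫ s, ∫ w, profile (2 * β) β
      (s / (dist x y ^ (-(1 / β)) * t * w ^ (1 / (2 * β)))) ∂η ∂μ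
    rw [Real.mul_rpow (by positivity) ht.le, ← Real.rpow_mul hd.le,
      show -(1 / β) * β = -((1 : ℕ) : ℝ) by push_cast; field_simp, Real.rpow_neg ht.le]
    have : 0 < t ^ β := by positivity
    generalize Real.log (dist x y ^ (-(1 / β)) * t) = l
    rw [div_mul_eq_mul_div, div_mul_eq_mul_div]
    field_simp
  · intro hnγ ε hε
    have hn2 : 0 < (n : ℝ) / 2 - γ := by linarith
    have g1 := Real.Gamma_pos_of_pos hn2
    have g2 := Real.Gamma_pos_of_pos hγ0
    have hlim := tendsto_mean_high (κ := β / γ) (a := β / γ * (n / 2)) hβ0 hβ1 (by positivity)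
      (by rw [div_mul_eq_mul_div, lt_div_iff₀ hγ0]; nlinarith) hγ0 hμ hη
    have h4 : (4 : ℝ) ^ (-((n : ℝ) / 2)) * 4 ^ ((n : ℝ) / 2 - γ) = (2 ^ (2 * γ))⁻¹ := by
      rw [← Real.rpow_add (by norm_num), ← Real.rpow_neg (by norm_num),
        show (4 : ℝ) = 2 ^ (2 : ℝ) by norm_num, ← Real.rpow_mul (by norm_num)]
      congr 1; ring
    have e5 : ((n : ℝ) - 2 * γ) / 2 = n / 2 - γ := by ring
    have e6 : Real.Gamma (1 + γ) = γ * Real.Gamma γ := by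
      rw [add_comm, Real.Gamma_add_one hγ0.ne']
    obtain ⟨R, hR, hbd⟩ := exists_ratio_bound
      (c := (4 * Real.pi) ^ (-((n : ℝ) / 2)))
      (C := 2 * γ * Real.Gamma (((n:ℝ) - 2*γ)/2) /
              (2 ^ (1 + 2*γ) * Real.pi ^ ((n:ℝ)/2) * Real.Gamma (1 - β) *
                Real.Gamma (1 + γ))) hlim (by
        rw [e5, e6, show β / (β / γ) = γ by field_simp, div_self hγ0.ne', Real.Gamma_one,
          show (β / γ * ((n : ℝ) / 2) - β) / (β / γ) = n / 2 - γ by field_simp,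
          Real.mul_rpow (by norm_num) hπ.le, Real.rpow_add (by norm_num), Real.rpow_one,
          Real.rpow_neg hπ.le]
        have hx : (0 : ℝ) < 2 ^ (2 * γ) := by positivity
        rw [show ∀ A B C D E F G : ℝ, A * B * (C * (D * (E * F * G))) = (A * F) * B * C * D * E * G
          from fun A B C D E F G => by ring, h4]
        field_simp) (by rw [e5, e6]; positivity) hε
    refine ⟨R, hR, fun t ht x y hxy hX => ?_⟩
    have hd : 0 < dist x y := dist_pos.2 hxy
    have hb := hbd _ hX
    convert hb using 3
    rw [hpI t ht x y hxy, hI]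
    have e1 : 1 / (β / γ) = γ / β := by field_simp
    simp only [e1]
    rw [Real.mul_rpow (by positivity) ht.le, ← Real.rpow_mul hd.le,
      show -(2 * γ / β) * β = -(2 * γ) by field_simp, Real.rpow_neg ht.le,
      show -(n : ℝ) = -(2 * γ) + (2 * γ - n) by ring, Real.rpow_add hd]
    have : 0 < t ^ β := by positivity
    have : 0 < dist x y ^ (2 * γ - (n : ℝ)) := by positivity
    field_simp
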